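/- arXiv:1902.00966 — 2 statements merged into one kernel-verified Lean document; each statement's English description precedes it below -/
import Mathlib

section
/- There exists a finite planar straight-line unit-distance graph (V,E) in the plane with exactly 38 unit triangles in which every edge is contained in a unit triangle, there are no additional triangles, every vertex has degree 2 or degree 4, and there are two distinct lines g₁ and g₂ through a common point, meeting at angle 2π/169, such that every vertex of degree 2 lies on g₁ ∪ g₂ and the rotation by 2π/169 about the intersection point of g₁ and g₂ maps the set of degree-2 vertices lying on g₁ bijectively onto the set of degree-2 vertices lying on g₂. -/
/-!
Straight-line unit-distance graphs in the Euclidean plane, modelled as ℂ.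
-/

noncomputable section
open scoped Classical

/-- A finite straight-line unit-distance graph in the plane: a finite vertex
set `V ⊆ ℂ` and a finite set `E` of 2-element subsets of `V` (edges), each of
whose two endpoints are at distance one. -/
structure UnitDistGraph where
  V : Finset ℂ
  E : Finset (Finset ℂ)
  edge_sub : ∀ e ∈ E, e ⊆ V
  edge_pair : ∀ e ∈ E, ∃ x y : ℂ, x ≠ y ∧ e = {x, y} ∧ dist x y = 1

namespace UnitDistGraph

/-- The closed segment drawn for an edge (the convex hull of its two endpoints). -/
def edgeSeg (e : Finset ℂ) : Set ℂ := convexHull ℝ (e : Set ℂ)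

/-- The degree of a vertex: the number of edges containing it. -/
def degree (G : UnitDistGraph) (v : ℂ) : ℕ := {e | e ∈ G.E ∧ v ∈ e}.ncard

/-- The graph is drawn planarly: two distinct closed edge segments intersect in
at most a common endpoint, and no vertex lies in the relative interior of an
edge (i.e. a vertex on a closed edge segment is an endpoint of that edge). -/
def Planar (G : UnitDistGraph) : Prop :=
  (∀ e ∈ G.E, ∀ f ∈ G.E, e ≠ f →
    edgeSeg e ∩ edgeSeg f ⊆ (e : Set ℂ) ∩ (f : Set ℂ)) ∧
  (∀ v ∈ G.V, ∀ e ∈ G.E, v ∈ edgeSeg e → v ∈ e)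

/-- The graph is 4-regular: every vertex belongs to exactly 4 edges. -/
def Regular4 (G : UnitDistGraph) : Prop := ∀ v ∈ G.V, G.degree v = 4

/-- A unit triangle: a 3-element subset of `V` all of whose pairs are edges. -/
def IsUnitTriangle (G : UnitDistGraph) (t : Finset ℂ) : Prop :=
  t ⊆ G.V ∧ t.card = 3 ∧ ∀ x ∈ t, ∀ y ∈ t, x ≠ y → ({x, y} : Finset ℂ) ∈ G.E

/-- The number of unit triangles of the graph. -/
def triangleCount (G : UnitDistGraph) : ℕ := {t : Finset ℂ | G.IsUnitTriangle t}.ncard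

/-- The graph consists only of unit triangles: every edge lies in a unit triangle. -/
def OnlyUnitTriangles (G : UnitDistGraph) : Prop :=
  ∀ e ∈ G.E, ∃ t : Finset ℂ, G.IsUnitTriangle t ∧ e ⊆ t

/-- The closed segment from `x` to `y` is a union of closed edge segments of `E`. -/
def SideCovered (G : UnitDistGraph) (x y : ℂ) : Prop :=
  ∃ S : Finset (Finset ℂ), S ⊆ G.E ∧ segment ℝ x y = ⋃ e ∈ S, edgeSeg e

/-- No additional triangles: any equilateral triangle on vertices of `V` each of
whose sides is a union of closed edge segments has side length 1. -/
def NoAdditionalTriangles (G : UnitDistGraph) : Prop :=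
  ∀ x ∈ G.V, ∀ y ∈ G.V, ∀ z ∈ G.V, x ≠ y → y ≠ z → x ≠ z →
    dist x y = dist y z → dist y z = dist z x →
    G.SideCovered x y → G.SideCovered y z → G.SideCovered z x →
    dist x y = 1

end UnitDistGraph

open UnitDistGraph

namespace UnitDistGraph

/-- Rotation of the plane about the center `c` by the angle `θ`. -/
def rot (c : ℂ) (θ : ℝ) (z : ℂ) : ℂ := c + Complex.exp (θ * Complex.I) * (z - c)

/-- The graph is invariant under the rotation about `c` by `θ`: this rotation
maps the vertex set onto itself and the edge set onto itself. -/
def RotInvariant (G : UnitDistGraph) (c : ℂ) (θ : ℝ) : Prop :=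
  (rot c θ) '' (G.V : Set ℂ) = (G.V : Set ℂ) ∧
  (Finset.image (rot c θ)) '' (G.E : Set (Finset ℂ)) = (G.E : Set (Finset ℂ))

/-- The unit triangles of the graph are non-overlapping: the interiors of the
closed triangular regions of two distinct unit triangles are disjoint. -/
def NonOverlapping (G : UnitDistGraph) : Prop :=
  ∀ t₁ t₂ : Finset ℂ, G.IsUnitTriangle t₁ → G.IsUnitTriangle t₂ → t₁ ≠ t₂ →
    interior (convexHull ℝ (t₁ : Set ℂ)) ∩ interior (convexHull ℝ (t₂ : Set ℂ)) = ∅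

/-- The line through the point `c` with direction `d`. -/
def line (c d : ℂ) : Set ℂ := {z : ℂ | ∃ t : ℝ, z = c + (t : ℂ) * d}

/-- Two unit-distance graphs are congruent if some isometry of the plane maps
the vertex set and edge set of one onto those of the other. -/
def Congruent (G₁ G₂ : UnitDistGraph) : Prop :=
  ∃ φ : ℂ ≃ᵢ ℂ, G₁.V.image φ = G₂.V ∧ G₁.E.image (Finset.image φ) = G₂.E

end UnitDistGraph

/-!
Equilateral triangles of side one are chained into a strip: consecutive triangles above the real
axis share a corner, each has an apex on the axis, and the strip is completed by its mirror image,
which has the same apexes. The sides off the axis are tilted alternately by `φ` and `-φ`. As each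
apex lies in two triangles and each other corner in two triangles of its own side, except at the
ends, only the four extreme corners have degree 2. For an odd number `n` of triangles on each side
the line through the two upper extreme corners has slope `sin φ / (n * cos φ)`, so solving
`tan φ = n * tan α` lets it meet the axis at the angle `α`; its mirror image is the second line. The
rotation by `2 * α` about the point where they meet takes one line to the other exactly as the
reflection does.

Planarity holds because any two triangles can be separated by a linear functional, the real or the
imaginary part, that is injective on the corners of each. There are no larger triangles because no
two edges continue each other in a straight line.
-/

theorem card_filter_mem_powersetCard_succ {α : Type*} {s : Finset α} {v : α} (hv : v ∈ s)
    (n : ℕ) : {e ∈ s.powersetCard (n + 1) | v ∈ e}.card = (s.card - 1).choose n := by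
  rw [← Finset.card_erase_of_mem hv, ← Finset.card_powersetCard]
  refine Finset.card_nbij' (Finset.erase · v) (insert v) ?_ ?_ ?_ ?_
  · intro e he
    simp_all [Finset.mem_powersetCard, Finset.erase_subset_erase]
  · intro e he
    obtain ⟨hes, hcard⟩ := Finset.mem_powersetCard.1 he
    have hve : v ∉ e := fun h => Finset.notMem_erase v s (hes h)
    simpa [Finset.mem_powersetCard, Finset.card_insert_of_notMem hve, hcard,
      Finset.insert_subset_iff, hv] using hes.trans (Finset.erase_subset v s)
  · exact fun e he => Finset.insert_erase (Finset.mem_filter.1 he).2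
  · exact fun e he => Finset.erase_insert fun h =>
      Finset.notMem_erase v s ((Finset.mem_powersetCard.1 he).1 h)

theorem injOn_triple {α β : Type*} {f : α → β} {a b c : α} (hab : f a ≠ f b) (hac : f a ≠ f c)
    (hbc : f b ≠ f c) : ({a, b, c} : Set α).InjOn f := by
  rintro x (rfl | rfl | rfl) y (rfl | rfl | rfl) h <;> simp_all

theorem intCast_units_sq (ε : ℤˣ) : ((ε : ℤ) : ℝ) ^ 2 = 1 := by
  rcases Int.units_eq_one_or ε with rfl | rfl <;> simp

/-- Two sets are separated if some linear functional is injective on each of them and nowhere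
larger on the first than on the second. This makes their convex hulls meet in common points only,
and in at most one of them. -/
def Separated {E : Type*} [AddCommGroup E] [Module ℝ E] (s t : Set E) : Prop :=
  ∃ L : E →ₗ[ℝ] ℝ, (∀ x ∈ s, ∀ y ∈ t, L x ≤ L y) ∧ s.InjOn L ∧ t.InjOn L

section Convexity

variable {E : Type*} [AddCommGroup E] [Module ℝ E] {s t : Set E}

theorem Separated.symm (h : Separated s t) : Separated t s := by
  obtain ⟨L, hle, hs, ht⟩ := h
  refine ⟨-L, fun x hx y hy => neg_le_neg (hle y hy x hx), ?_, ?_⟩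
  · exact fun x hx y hy hxy => ht hx hy (neg_injective hxy)
  · exact fun x hx y hy hxy => hs hx hy (neg_injective hxy)

theorem Separated.mono {s' t' : Set E} (h : Separated s t) (hs : s' ⊆ s) (ht : t' ⊆ t) :
    Separated s' t' :=
  h.imp fun _ hL =>
    ⟨fun x hx y hy => hL.1 x (hs hx) y (ht hy), hL.2.1.mono hs, hL.2.2.mono ht⟩

theorem Separated.subsingleton_inter (h : Separated s t) : (s ∩ t).Subsingleton := by
  obtain ⟨L, hle, hs, -⟩ := h
  exact fun x hx y hy => hs hx.1 hy.1 ((hle x hx.1 y hy.2).antisymm (hle y hy.1 x hx.2))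

theorem convex_setOf_eq_or_lt (L : E →ₗ[ℝ] ℝ) (y : E) : Convex ℝ {q | q = y ∨ L q < L y} := by
  refine convex_iff_pairwise_pos.2 fun p hp q hq hpq a b ha hb hab => .inr ?_
  have key : a * L p + b * L q < a * L y + b * L y := by
    rcases hp with rfl | hp
    · exact add_lt_add_right (mul_lt_mul_of_pos_left (hq.resolve_left hpq.symm) hb) _
    · have hqy : L q ≤ L y := hq.elim (fun h => (congrArg L h).le) le_of_lt
      exact add_lt_add_of_lt_of_le (mul_lt_mul_of_pos_left hp ha)
        (mul_le_mul_of_nonneg_left hqy hb.le)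
  simpa [← add_mul, hab] using key

/- Every convex combination other than the highest point of `s` itself lies strictly below it. -/
theorem mem_of_mem_convexHull_of_forall_le {L : E →ₗ[ℝ] ℝ} (hs : s.Finite) (hinj : s.InjOn L)
    {p : E} (hp : p ∈ convexHull ℝ s) (hle : ∀ x ∈ s, L x ≤ L p) : p ∈ s := by
  obtain ⟨y, hy, hmax⟩ := hs.exists_maximalFor L s (convexHull_nonempty_iff.1 ⟨p, hp⟩)
  have hlt : s ⊆ {q | q = y ∨ L q < L y} := fun x hx => by
    rcases le_total (L x) (L y) with h | h
    · exact h.eq_or_lt.imp_left (hinj hx hy)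
    · exact .inl (hinj hx hy ((hmax hx h).antisymm h))
  obtain rfl | hpy := convexHull_min hlt (convex_setOf_eq_or_lt L y) hp
  · exact hy
  · exact absurd (hle y hy) hpy.not_ge

theorem Separated.convexHull_inter_subset (h : Separated s t) (hs : s.Finite) (ht : t.Finite) :
    convexHull ℝ s ∩ convexHull ℝ t ⊆ s ∩ t := by
  obtain ⟨L, hle, hsL, htL⟩ := h
  rintro p ⟨hps, hpt⟩
  have hs_le : ∀ x ∈ s, L x ≤ L p := fun x hx =>
    convexHull_min (hle x hx) (convex_halfSpace_ge L.isLinear (L x)) hpt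
  have ht_ge : ∀ y ∈ t, L p ≤ L y := fun y hy =>
    convexHull_min (fun x hx => hle x hx y hy) (convex_halfSpace_le L.isLinear (L y)) hps
  have hnegL : t.InjOn (-L) := fun x hx y hy hxy => htL hx hy (neg_injective hxy)
  exact ⟨mem_of_mem_convexHull_of_forall_le hs hsL hps hs_le,
    mem_of_mem_convexHull_of_forall_le ht hnegL hpt fun y hy => neg_le_neg (ht_ge y hy)⟩

end Convexity

section NormedSpace

variable {E : Type*} [NormedAddCommGroup E] [NormedSpace ℝ E] {v x y p : E}

theorem sameRay_sub_left_of_mem_segment (hp : p ∈ segment ℝ v x) : SameRay ℝ (p - v) (x - v) :=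
  (mem_segment_iff_wbtw.1 hp).sameRay_vsub_left

theorem eq_of_mem_segment_of_mem_segment (hdist : dist v x = dist v y) (hxy : x ≠ y)
    (hpx : p ∈ segment ℝ v x) (hpy : p ∈ segment ℝ v y) : p = v := by
  by_contra hpv
  refine hxy (sub_left_injective (norm_injOn_ray_left (sub_ne_zero.2 hpv)
    (sameRay_sub_left_of_mem_segment hpx) (sameRay_sub_left_of_mem_segment hpy) ?_))
  rwa [← dist_eq_norm', ← dist_eq_norm']

theorem exists_mem_inter_openSegment_of_subset_biUnion {ι : Type*} {S : Finset ι} {F : ι → Set E}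
    (hF : ∀ i ∈ S, IsClosed (F i)) (hcov : openSegment ℝ x y ⊆ ⋃ i ∈ S, F i) :
    ∃ i ∈ S, x ∈ F i ∧ (F i ∩ openSegment ℝ x y).Nonempty := by
  have hx : x ∈ closure (⋃ i ∈ S, F i ∩ openSegment ℝ x y) := by
    rw [← Set.iUnion₂_inter, Set.inter_eq_right.2 hcov]
    exact segment_subset_closure_openSegment (left_mem_segment ℝ x y)
  rw [Finset.closure_biUnion] at hx
  obtain ⟨i, hi, hxi⟩ := Set.mem_iUnion₂.1 hx
  exact ⟨i, hi, closure_minimal Set.inter_subset_left (hF i hi) hxi,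
    closure_nonempty_iff.1 ⟨x, hxi⟩⟩

end NormedSpace

namespace UnitDistGraph

section SideLengths

variable {G : UnitDistGraph} {e f : Finset ℂ} {x y v : ℂ}

/-- At no vertex do two edges leave in opposite directions, so that a segment made up of edges
is a single edge. -/
def NoStraightAngle (G : UnitDistGraph) : Prop :=
  ∀ ⦃x z y : ℂ⦄, {z, x} ∈ G.E → {z, y} ∈ G.E → z - x ≠ y - z

theorem edgeSeg_pair (x y : ℂ) : edgeSeg {x, y} = segment ℝ x y := by
  rw [edgeSeg, Finset.coe_pair, convexHull_pair]

theorem isClosed_edgeSeg (e : Finset ℂ) : IsClosed (edgeSeg e) :=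
  e.finite_toSet.isClosed_convexHull (𝕜 := ℝ)

theorem exists_eq_pair_of_mem_edge (he : e ∈ G.E) (hv : v ∈ e) :
    ∃ x, e = {v, x} ∧ dist v x = 1 := by
  obtain ⟨a, b, -, rfl, hab⟩ := G.edge_pair e he
  obtain rfl | hvb := Finset.mem_insert.1 hv
  · exact ⟨b, rfl, hab⟩
  · obtain rfl := Finset.mem_singleton.1 hvb
    exact ⟨a, Finset.pair_comm a v, by rwa [dist_comm]⟩

theorem edgeSeg_inter_subset_of_mem (he : e ∈ G.E) (hf : f ∈ G.E) (hef : e ≠ f) (hve : v ∈ e)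
    (hvf : v ∈ f) : edgeSeg e ∩ edgeSeg f ⊆ {v} := by
  obtain ⟨x, rfl, hx⟩ := exists_eq_pair_of_mem_edge he hve
  obtain ⟨y, rfl, hy⟩ := exists_eq_pair_of_mem_edge hf hvf
  rw [edgeSeg_pair, edgeSeg_pair]
  rintro p ⟨hpx, hpy⟩
  exact eq_of_mem_segment_of_mem_segment (hx.trans hy.symm) (by rintro rfl; exact hef rfl) hpx hpy

/- If the first edge ended at `z` before reaching `y`, the edge continuing at `z` would make a
straight angle with it. -/
theorem NoStraightAngle.dist_eq_one_of_sideCovered (hG : G.NoStraightAngle) (hP : G.Planar)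
    (hx : x ∈ G.V) (h : G.SideCovered x y) : dist x y = 1 := by
  obtain ⟨S, hSE, hS⟩ := h
  have hcov {w : ℂ} (hw : w ∈ segment ℝ x y) : openSegment ℝ w y ⊆ ⋃ e ∈ S, edgeSeg e :=
    hS ▸ (openSegment_subset_segment ℝ w y).trans
      ((convex_segment x y).segment_subset hw (right_mem_segment ℝ x y))
  have hsub {e : Finset ℂ} (he : e ∈ S) : edgeSeg e ⊆ segment ℝ x y :=
    hS ▸ Set.subset_biUnion_of_mem (u := edgeSeg) he
  obtain ⟨e, he, hxe, -⟩ := exists_mem_inter_openSegment_of_subset_biUnion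
    (fun e _ => isClosed_edgeSeg e) (hcov (left_mem_segment ℝ x y))
  obtain ⟨z, rfl, hxz⟩ := exists_eq_pair_of_mem_edge (hSE he) (hP.2 x hx e (hSE he) hxe)
  have hzV : z ∈ G.V := G.edge_sub _ (hSE he) (by simp)
  have hz : z ∈ segment ℝ x y := hsub he (by rw [edgeSeg_pair]; exact right_mem_segment ℝ x z)
  obtain rfl | hzy := eq_or_ne z y
  · exact hxz
  obtain ⟨f, hf, hzf, p, hpf, hp⟩ := exists_mem_inter_openSegment_of_subset_biUnion
    (fun e _ => isClosed_edgeSeg e) (hcov hz)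
  obtain ⟨w, rfl, hzw⟩ := exists_eq_pair_of_mem_edge (hSE hf) (hP.2 z hzV f (hSE hf) hzf)
  refine absurd ?_ (hG (Finset.pair_comm x z ▸ hSE he) (hSE hf))
  have hpz : p - z ≠ 0 := sub_ne_zero.2 fun h => hzy (by
    rwa [h, left_mem_openSegment_iff] at hp)
  have hpy := sameRay_sub_left_of_mem_segment (openSegment_subset_segment ℝ z y hp)
  have hpw := sameRay_sub_left_of_mem_segment (edgeSeg_pair z w ▸ hpf)
  have hyz : SameRay ℝ (y - z) (z - x) := (mem_segment_iff_wbtw.1 hz).sameRay_vsub.symm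
  have hpx := hpy.trans hyz fun h => absurd (sub_eq_zero.1 h).symm hzy
  refine norm_injOn_ray_left hpz hpx hpw ?_
  rw [← dist_eq_norm', ← dist_eq_norm', hxz, hzw]

theorem NoStraightAngle.noAdditionalTriangles (hG : G.NoStraightAngle) (hP : G.Planar) :
    G.NoAdditionalTriangles :=
  fun _ hx _ _ _ _ _ _ _ _ _ h _ _ => hG.dist_eq_one_of_sideCovered hP hx h

end SideLengths

section OfTriangles

variable {ι : Type*} [Fintype ι] {t : ι → Finset ℂ}
  {ht : ∀ i, (t i : Set ℂ).Pairwise fun x y => dist x y = 1} {e s : Finset ℂ} {v x y : ℂ}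

/-- The graph whose vertices and edges are those of a finite family of equilateral triangles of
side one, each given by its set of corners. -/
def ofTriangles (t : ι → Finset ℂ) (ht : ∀ i, (t i : Set ℂ).Pairwise fun x y => dist x y = 1) :
    UnitDistGraph where
  V := Finset.univ.biUnion t
  E := Finset.univ.biUnion fun i => (t i).powersetCard 2
  edge_sub e he := by
    obtain ⟨i, -, hi⟩ := Finset.mem_biUnion.1 he
    exact (Finset.mem_powersetCard.1 hi).1.trans
      (Finset.subset_biUnion_of_mem t (Finset.mem_univ i))
  edge_pair e he := by
    obtain ⟨i, -, hi⟩ := Finset.mem_biUnion.1 he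
    obtain ⟨hei, hcard⟩ := Finset.mem_powersetCard.1 hi
    obtain ⟨x, y, hxy, rfl⟩ := Finset.card_eq_two.1 hcard
    exact ⟨x, y, hxy, rfl, ht i (hei (by simp)) (hei (by simp)) hxy⟩

theorem mem_V_ofTriangles : v ∈ (ofTriangles t ht).V ↔ ∃ i, v ∈ t i := by simp [ofTriangles]

theorem mem_E_ofTriangles : e ∈ (ofTriangles t ht).E ↔ ∃ i, e ⊆ t i ∧ e.card = 2 := by
  simp [ofTriangles, Finset.mem_powersetCard]

theorem pair_mem_E_ofTriangles :
    {x, y} ∈ (ofTriangles t ht).E ↔ x ≠ y ∧ ∃ i, x ∈ t i ∧ y ∈ t i := by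
  rw [mem_E_ofTriangles]
  constructor
  · rintro ⟨i, hi, hcard⟩
    exact ⟨fun h => by simp [h] at hcard, i, hi (by simp), hi (by simp)⟩
  · rintro ⟨hxy, i, hx, hy⟩
    exact ⟨i, by simp [Finset.insert_subset_iff, hx, hy], Finset.card_pair hxy⟩

theorem isUnitTriangle_ofTriangles (hcard : ∀ i, (t i).card = 3) (i : ι) :
    (ofTriangles t ht).IsUnitTriangle (t i) :=
  ⟨fun _ hv => mem_V_ofTriangles.2 ⟨i, hv⟩, hcard i,
    fun _ hx _ hy hxy => pair_mem_E_ofTriangles.2 ⟨hxy, i, hx, hy⟩⟩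

theorem onlyUnitTriangles_ofTriangles (hcard : ∀ i, (t i).card = 3) :
    (ofTriangles t ht).OnlyUnitTriangles := fun _ he =>
  let ⟨i, hei, _⟩ := mem_E_ofTriangles.1 he
  ⟨t i, isUnitTriangle_ofTriangles hcard i, hei⟩

theorem planar_ofTriangles (hcard : ∀ i, (t i).card = 3)
    (hsep : Pairwise fun i j => Separated (t i : Set ℂ) (t j)) : (ofTriangles t ht).Planar := by
  have hcross : ∀ e ∈ (ofTriangles t ht).E, ∀ f ∈ (ofTriangles t ht).E, e ≠ f →
      edgeSeg e ∩ edgeSeg f ⊆ (e : Set ℂ) ∩ f := by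
    intro e he f hf hef
    obtain ⟨i, hei, hecard⟩ := mem_E_ofTriangles.1 he
    obtain ⟨j, hfj, hfcard⟩ := mem_E_ofTriangles.1 hf
    obtain rfl | hij := eq_or_ne i j
    · have hdisj : ¬ Disjoint e f := fun hdisj => by
        have := Finset.card_le_card (Finset.union_subset hei hfj)
        rw [Finset.card_union_of_disjoint hdisj, hcard] at this
        lia
      obtain ⟨v, hve, hvf⟩ := Finset.not_disjoint_iff.1 hdisj
      exact (edgeSeg_inter_subset_of_mem he hf hef hve hvf).trans
        (Set.singleton_subset_iff.2 ⟨hve, hvf⟩)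
    · exact ((hsep hij).mono hei hfj).convexHull_inter_subset e.finite_toSet f.finite_toSet
  refine ⟨hcross, fun v hv e he hve => ?_⟩
  obtain ⟨i, hvi⟩ := mem_V_ofTriangles.1 hv
  obtain ⟨x, hxi, hxv⟩ := Finset.exists_mem_ne (by rw [hcard i]; simp) v
  have hf : {v, x} ∈ (ofTriangles t ht).E := pair_mem_E_ofTriangles.2 ⟨hxv.symm, i, hvi, hxi⟩
  by_contra hve'
  exact hve' (hcross e he _ hf (by rintro rfl; simp at hve')
    ⟨hve, subset_convexHull ℝ _ (by simp)⟩).1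

theorem degree_ofTriangles (hcard : ∀ i, (t i).card = 3)
    (hsep : Pairwise fun i j => Separated (t i : Set ℂ) (t j)) (v : ℂ) :
    (ofTriangles t ht).degree v = 2 * ({i | v ∈ t i} : Finset ι).card := by
  have hset : {e | e ∈ (ofTriangles t ht).E ∧ v ∈ e} =
      ({i | v ∈ t i} : Finset ι).biUnion fun i => {e ∈ (t i).powersetCard 2 | v ∈ e} := by
    ext e
    simp only [mem_E_ofTriangles, Set.mem_ofPred_eq, Finset.coe_biUnion, Finset.coe_filter,
      Finset.mem_univ, true_and, Set.mem_iUnion, Finset.mem_powersetCard, exists_prop]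
    exact ⟨fun ⟨⟨i, hi⟩, hv⟩ => ⟨i, hi.1 hv, hi, hv⟩, fun ⟨i, _, hi, hv⟩ => ⟨⟨i, hi⟩, hv⟩⟩
  have hdisj : ({i | v ∈ t i} : Set ι).PairwiseDisjoint
      fun i => {e ∈ (t i).powersetCard 2 | v ∈ e} := by
    refine fun i _ j _ hij => Finset.disjoint_left.2 fun e hei hej => ?_
    obtain ⟨hei, he⟩ := Finset.mem_powersetCard.1 (Finset.mem_filter.1 hei).1
    obtain ⟨hej, -⟩ := Finset.mem_powersetCard.1 (Finset.mem_filter.1 hej).1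
    obtain ⟨x, hx, y, hy, hxy⟩ := Finset.one_lt_card.1 (he ▸ one_lt_two)
    exact hxy ((hsep hij).subsingleton_inter ⟨hei hx, hej hx⟩ ⟨hei hy, hej hy⟩)
  rw [degree, hset, Set.ncard_coe_finset, Finset.card_biUnion (by simpa using hdisj), mul_comm]
  refine Finset.sum_const_nat fun i hi => ?_
  rw [card_filter_mem_powersetCard_succ (Finset.mem_filter.1 hi).2, hcard]
  rfl

theorem isUnitTriangle_ofTriangles_iff (hcard : ∀ i, (t i).card = 3)
    (hmeet : ∀ i j k, ¬ Disjoint (t i) (t j) → ¬ Disjoint (t j) (t k) → ¬ Disjoint (t i) (t k) →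
      i = j ∨ j = k ∨ i = k) :
    (ofTriangles t ht).IsUnitTriangle s ↔ ∃ i, t i = s := by
  refine ⟨fun ⟨_, hs, hE⟩ => ?_, by rintro ⟨i, rfl⟩; exact isUnitTriangle_ofTriangles hcard i⟩
  suffices ∃ i, s ⊆ t i from
    this.imp fun i hi => (Finset.eq_of_subset_of_card_le hi (by rw [hcard, hs])).symm
  obtain ⟨a, b, c, hab, hac, hbc, rfl⟩ := Finset.card_eq_three.1 hs
  obtain ⟨-, i, hai, hbi⟩ := pair_mem_E_ofTriangles.1 (hE a (by simp) b (by simp) hab)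
  obtain ⟨-, j, hbj, hcj⟩ := pair_mem_E_ofTriangles.1 (hE b (by simp) c (by simp) hbc)
  obtain ⟨-, k, hak, hck⟩ := pair_mem_E_ofTriangles.1 (hE a (by simp) c (by simp) hac)
  simp only [Finset.insert_subset_iff, Finset.singleton_subset_iff]
  obtain rfl | rfl | rfl := hmeet i j k (Finset.not_disjoint_iff.2 ⟨b, hbi, hbj⟩)
    (Finset.not_disjoint_iff.2 ⟨c, hcj, hck⟩) (Finset.not_disjoint_iff.2 ⟨a, hai, hak⟩)
  · exact ⟨i, hai, hbi, hcj⟩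
  · exact ⟨j, hak, hbj, hcj⟩
  · exact ⟨i, hai, hbi, hck⟩

theorem triangleCount_ofTriangles (hcard : ∀ i, (t i).card = 3)
    (hsep : Pairwise fun i j => Separated (t i : Set ℂ) (t j))
    (hmeet : ∀ i j k, ¬ Disjoint (t i) (t j) → ¬ Disjoint (t j) (t k) → ¬ Disjoint (t i) (t k) →
      i = j ∨ j = k ∨ i = k) :
    (ofTriangles t ht).triangleCount = Fintype.card ι := by
  have hinj : t.Injective := fun i j hij => by
    by_contra hne
    obtain ⟨x, hx, y, hy, hxy⟩ := Finset.one_lt_card.1 (by simp [hcard] : 1 < (t i).card)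
    exact hxy ((hsep hne).subsingleton_inter ⟨hx, hij ▸ hx⟩ ⟨hy, hij ▸ hy⟩)
  simp only [triangleCount, isUnitTriangle_ofTriangles_iff hcard hmeet]
  exact (Set.ncard_range_of_injective hinj).trans Nat.card_eq_fintype_card

end OfTriangles

section Strip

open Real

/-- The angles at the axis of the strip: the `k`-th triangle has its apex on the real axis, and
its two other corners at distance one from the apex in the directions `π - baseAngle φ k` and
`baseAngle φ (k + 1)` on one side of the axis. For `φ = 0` the triangles have a side parallel to
the axis, and the sides opposite the axis are tilted alternately by `±φ`. -/
def baseAngle (φ : ℝ) (k : ℕ) : ℝ := π / 3 - (-1) ^ k * φ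

/-- The corners of the strip off the axis, where consecutive triangles on the same side are
hinged together; the sign `ε` selects the upper or lower side. -/
def hinge (φ : ℝ) (ε : ℤˣ) (k : ℕ) : ℂ := ⟨k * cos φ, ((ε : ℤ) : ℝ) * sin (baseAngle φ k)⟩

/-- The corners of the strip on the axis, each shared by an upper and a lower triangle. -/
def apex (φ : ℝ) (k : ℕ) : ℂ := ⟨k * cos φ + cos (baseAngle φ k), 0⟩

/-- The `k`-th triangle on the side `ε` of the strip. -/
def stripTriangle (φ : ℝ) (ε : ℤˣ) (k : ℕ) : Finset ℂ :=
  {hinge φ ε k, hinge φ ε (k + 1), apex φ k}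

variable {φ : ℝ} {ε δ : ℤˣ} {k l n : ℕ} {v x y : ℂ}

theorem baseAngle_add_two (φ : ℝ) (k : ℕ) : baseAngle φ (k + 2) = baseAngle φ k := by
  simp [baseAngle, pow_add]

theorem sin_baseAngle (φ : ℝ) (k : ℕ) :
    sin (baseAngle φ k) = √3 / 2 * cos φ - (-1) ^ k * (sin φ / 2) := by
  rcases neg_one_pow_eq_or ℝ k with h | h <;>
    simp only [baseAngle, h, one_mul, neg_one_mul, sub_neg_eq_add, sin_sub, sin_add,
      sin_pi_div_three, cos_pi_div_three] <;> ring

theorem cos_baseAngle (φ : ℝ) (k : ℕ) :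
    cos (baseAngle φ k) = cos φ / 2 + (-1) ^ k * (√3 / 2 * sin φ) := by
  rcases neg_one_pow_eq_or ℝ k with h | h <;>
    simp only [baseAngle, h, one_mul, neg_one_mul, sub_neg_eq_add, cos_sub, cos_add,
      sin_pi_div_three, cos_pi_div_three] <;> ring

theorem cos_baseAngle_add_cos_baseAngle_succ (φ : ℝ) (k : ℕ) :
    cos (baseAngle φ k) + cos (baseAngle φ (k + 1)) = cos φ := by
  rw [cos_baseAngle, cos_baseAngle]
  ring

theorem sin_baseAngle_succ_sub_sin_baseAngle (φ : ℝ) (k : ℕ) :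
    sin (baseAngle φ (k + 1)) - sin (baseAngle φ k) = (-1) ^ k * sin φ := by
  rw [sin_baseAngle, sin_baseAngle]
  ring

theorem sin_baseAngle_succ_ne (hφ : sin φ ≠ 0) (k : ℕ) :
    sin (baseAngle φ (k + 1)) ≠ sin (baseAngle φ k) := by
  rw [← sub_ne_zero, sin_baseAngle_succ_sub_sin_baseAngle]
  exact mul_ne_zero (by simp) hφ

theorem cos_baseAngle_succ_ne (hφ : sin φ ≠ 0) (k : ℕ) :
    cos (baseAngle φ (k + 1)) ≠ cos (baseAngle φ k) := by
  have h : cos (baseAngle φ k) - cos (baseAngle φ (k + 1)) = (-1) ^ k * (√3 * sin φ) := by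
    rw [cos_baseAngle, cos_baseAngle]
    ring
  refine (sub_ne_zero.1 ?_).symm
  rw [h]
  exact mul_ne_zero (by simp) (mul_ne_zero (by simp) hφ)

theorem baseAngle_mem_Ioo (hφ : |φ| < π / 6) (k : ℕ) : baseAngle φ k ∈ Set.Ioo (π / 6) (π / 2) := by
  have h : |(-1) ^ k * φ| < π / 6 := by simpa [abs_mul] using hφ
  rw [abs_lt] at h
  constructor <;> unfold baseAngle <;> linarith

theorem half_lt_sin_baseAngle (hφ : |φ| < π / 6) (k : ℕ) : 1 / 2 < sin (baseAngle φ k) := by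
  obtain ⟨h₁, h₂⟩ := baseAngle_mem_Ioo hφ k
  exact sin_pi_div_six ▸ sin_lt_sin_of_lt_of_le_pi_div_two (by linarith [pi_pos]) h₂.le h₁

theorem cos_baseAngle_pos (hφ : |φ| < π / 6) (k : ℕ) : 0 < cos (baseAngle φ k) := by
  obtain ⟨h₁, h₂⟩ := baseAngle_mem_Ioo hφ k
  exact cos_pos_of_mem_Ioo ⟨by linarith [pi_pos], h₂⟩

theorem cos_baseAngle_lt (hφ : |φ| < π / 6) (k : ℕ) : cos (baseAngle φ k) < cos φ := by
  linarith [cos_baseAngle_pos hφ (k + 1), cos_baseAngle_add_cos_baseAngle_succ φ k]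

theorem cos_pos_of_abs_lt (hφ : |φ| < π / 6) : 0 < cos φ :=
  (cos_baseAngle_pos hφ 0).trans (cos_baseAngle_lt hφ 0)

theorem dist_hinge_apex (φ : ℝ) (ε : ℤˣ) (k : ℕ) : dist (hinge φ ε k) (apex φ k) = 1 := by
  rw [Complex.dist_eq_re_im, sqrt_eq_one]
  simp only [hinge, apex]
  linear_combination sin (baseAngle φ k) ^ 2 * intCast_units_sq ε +
    sin_sq_add_cos_sq (baseAngle φ k)

theorem dist_hinge_succ_apex (φ : ℝ) (ε : ℤˣ) (k : ℕ) :
    dist (hinge φ ε (k + 1)) (apex φ k) = 1 := by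
  have h : (hinge φ ε (k + 1)).re - (apex φ k).re = cos (baseAngle φ (k + 1)) := by
    simp only [hinge, apex]
    push_cast
    linear_combination -cos_baseAngle_add_cos_baseAngle_succ φ k
  rw [Complex.dist_eq_re_im, sqrt_eq_one, h]
  simp only [hinge, apex]
  linear_combination sin (baseAngle φ (k + 1)) ^ 2 * intCast_units_sq ε +
    sin_sq_add_cos_sq (baseAngle φ (k + 1))

theorem dist_hinge_hinge_succ (φ : ℝ) (ε : ℤˣ) (k : ℕ) :
    dist (hinge φ ε k) (hinge φ ε (k + 1)) = 1 := by
  have hre : (hinge φ ε (k + 1)).re - (hinge φ ε k).re = cos φ := by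
    simp only [hinge]
    push_cast
    ring
  have him : (hinge φ ε (k + 1)).im - (hinge φ ε k).im = ε * ((-1) ^ k * sin φ) := by
    rw [← sin_baseAngle_succ_sub_sin_baseAngle]
    exact (mul_sub _ _ _).symm
  rw [dist_comm, Complex.dist_eq_re_im, sqrt_eq_one, hre, him, mul_pow, mul_pow, intCast_units_sq,
    ← pow_mul, mul_comm k, pow_mul, neg_one_sq, one_pow, one_mul, one_mul, cos_sq_add_sin_sq]

theorem pairwise_dist_stripTriangle (φ : ℝ) (ε : ℤˣ) (k : ℕ) :
    (stripTriangle φ ε k : Set ℂ).Pairwise fun x y => dist x y = 1 := by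
  have : Std.Symm fun x y : ℂ => dist x y = 1 := ⟨fun x y h => (dist_comm y x).trans h⟩
  simp [stripTriangle, Set.pairwise_insert_of_symm, dist_hinge_apex,
    dist_hinge_succ_apex, dist_hinge_hinge_succ]

theorem hinge_inj (hφ : |φ| < π / 6) : hinge φ ε k = hinge φ δ l ↔ ε = δ ∧ k = l := by
  have hcos := cos_pos_of_abs_lt hφ
  have hsin := half_lt_sin_baseAngle hφ
  refine ⟨fun h => ?_, by rintro ⟨rfl, rfl⟩; rfl⟩
  obtain rfl : k = l := by
    simpa [hinge, hcos.ne'] using congrArg Complex.re h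
  refine ⟨?_, rfl⟩
  simpa [hinge, (one_half_pos.trans (hsin k)).ne', Units.ext_iff] using congrArg Complex.im h

theorem hinge_ne_apex (hφ : |φ| < π / 6) : hinge φ ε k ≠ apex φ l := fun h => by
  have := half_lt_sin_baseAngle hφ k
  exact (mul_ne_zero (by simp) (by linarith)) (congrArg Complex.im h)

theorem re_apex_mem_Ioo (hφ : |φ| < π / 6) (k : ℕ) :
    (apex φ k).re ∈ Set.Ioo (k * cos φ) ((k + 1) * cos φ) := by
  have h₁ := cos_baseAngle_pos hφ k
  have h₂ := cos_baseAngle_lt hφ k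
  constructor <;> simp only [apex] <;> linarith

theorem apex_injective (hφ : |φ| < π / 6) : (apex φ).Injective := by
  have hcos := cos_pos_of_abs_lt hφ
  refine fun k l h => ?_
  have key {k l : ℕ} (h : apex φ k = apex φ l) : k ≤ l := by
    have hk := (re_apex_mem_Ioo hφ k).1
    have := hk.trans (h ▸ (re_apex_mem_Ioo hφ l).2)
    exact Nat.lt_succ_iff.1 (by exact_mod_cast lt_of_mul_lt_mul_right this hcos.le)
  exact (key h).antisymm (key h.symm)

theorem hinge_mem_stripTriangle (hφ : |φ| < π / 6) :
    hinge φ ε k ∈ stripTriangle φ δ l ↔ ε = δ ∧ (k = l ∨ k = l + 1) := by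
  simp [stripTriangle, hinge_inj hφ, hinge_ne_apex hφ, and_or_left]

theorem apex_mem_stripTriangle (hφ : |φ| < π / 6) : apex φ k ∈ stripTriangle φ δ l ↔ k = l := by
  simp [stripTriangle, (hinge_ne_apex hφ).symm, (apex_injective hφ).eq_iff]

theorem card_stripTriangle (hφ : |φ| < π / 6) (ε : ℤˣ) (k : ℕ) :
    (stripTriangle φ ε k).card = 3 :=
  Finset.card_eq_three.2 ⟨_, _, _, by simp [hinge_inj hφ], hinge_ne_apex hφ, hinge_ne_apex hφ, rfl⟩

theorem eq_or_of_not_disjoint_stripTriangle (hφ : |φ| < π / 6)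
    (h : ¬ Disjoint (stripTriangle φ ε k) (stripTriangle φ δ l)) :
    k = l ∨ ε = δ ∧ (k = l + 1 ∨ l = k + 1) := by
  obtain ⟨v, hv, hv'⟩ := Finset.not_disjoint_iff.1 h
  simp only [stripTriangle.eq_1 φ ε, Finset.mem_insert, Finset.mem_singleton] at hv
  obtain rfl | rfl | rfl := hv
  · obtain ⟨rfl, h⟩ := (hinge_mem_stripTriangle hφ).1 hv'
    lia
  · obtain ⟨rfl, h⟩ := (hinge_mem_stripTriangle hφ).1 hv'
    lia
  · exact .inl ((apex_mem_stripTriangle hφ).1 hv')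

theorem re_mem_Icc_of_mem_stripTriangle (hφ : |φ| < π / 6) (hv : v ∈ stripTriangle φ ε k) :
    v.re ∈ Set.Icc (k * cos φ) ((k + 1) * cos φ) := by
  have hcos := cos_pos_of_abs_lt hφ
  simp only [stripTriangle, Finset.mem_insert, Finset.mem_singleton] at hv
  obtain rfl | rfl | rfl := hv
  · exact ⟨le_rfl, by simp only [hinge]; linarith⟩
  · constructor <;> simp only [hinge] <;> push_cast <;> linarith
  · exact Set.Ioo_subset_Icc_self (re_apex_mem_Ioo hφ k)

theorem injOn_re_stripTriangle (hφ : |φ| < π / 6) (ε : ℤˣ) (k : ℕ) :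
    (stripTriangle φ ε k : Set ℂ).InjOn Complex.re := by
  obtain ⟨h₁, h₂⟩ := re_apex_mem_Ioo hφ k
  have h₂' : (apex φ k).re < (hinge φ ε (k + 1)).re := by exact_mod_cast h₂
  rw [stripTriangle, Finset.coe_insert, Finset.coe_pair]
  exact injOn_triple (h₁.trans h₂').ne h₁.ne h₂'.ne'

theorem injOn_im_stripTriangle (hφ : |φ| < π / 6) (hφ₀ : sin φ ≠ 0) (ε : ℤˣ) (k : ℕ) :
    (stripTriangle φ ε k : Set ℂ).InjOn Complex.im := by
  have hε : ((ε : ℤ) : ℝ) ≠ 0 := by simp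
  have hsin (k : ℕ) : sin (baseAngle φ k) ≠ 0 :=
    (one_half_pos.trans (half_lt_sin_baseAngle hφ k)).ne'
  rw [stripTriangle, Finset.coe_insert, Finset.coe_pair]
  exact injOn_triple ((mul_right_injective₀ hε).ne (sin_baseAngle_succ_ne hφ₀ k).symm)
    (mul_ne_zero hε (hsin k)) (mul_ne_zero hε (hsin (k + 1)))

theorem units_mul_im_hinge (φ : ℝ) (ε : ℤˣ) (k : ℕ) :
    ((ε : ℤ) : ℝ) * (hinge φ ε k).im = sin (baseAngle φ k) := by
  rw [hinge, ← mul_assoc, ← sq, intCast_units_sq, one_mul]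

theorem units_mul_im_nonneg (hφ : |φ| < π / 6) (hv : v ∈ stripTriangle φ ε k) :
    0 ≤ ((ε : ℤ) : ℝ) * v.im := by
  have hsin := half_lt_sin_baseAngle hφ
  simp only [stripTriangle, Finset.mem_insert, Finset.mem_singleton] at hv
  obtain rfl | rfl | rfl := hv
  · linarith [hsin k, units_mul_im_hinge φ ε k]
  · linarith [hsin (k + 1), units_mul_im_hinge φ ε (k + 1)]
  · simp [apex]

theorem separated_stripTriangle_of_lt (hφ : |φ| < π / 6) (ε δ : ℤˣ) (hkl : k < l) :
    Separated (stripTriangle φ ε k : Set ℂ) (stripTriangle φ δ l) := by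
  refine ⟨Complex.reLm, fun x hx y hy => ?_, injOn_re_stripTriangle hφ ε k,
    injOn_re_stripTriangle hφ δ l⟩
  have hcos := cos_pos_of_abs_lt hφ
  have hkl' : (k + 1 : ℝ) ≤ l := by exact_mod_cast hkl
  exact ((re_mem_Icc_of_mem_stripTriangle hφ hx).2.trans
    (mul_le_mul_of_nonneg_right hkl' hcos.le)).trans (re_mem_Icc_of_mem_stripTriangle hφ hy).1

theorem separated_stripTriangle_of_ne (hφ : |φ| < π / 6) (hφ₀ : sin φ ≠ 0) (hεδ : ε ≠ δ)
    (k l : ℕ) : Separated (stripTriangle φ ε k : Set ℂ) (stripTriangle φ δ l) := by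
  obtain rfl : ε = -δ := Int.units_ne_iff_eq_neg.1 hεδ
  have hinj (γ : ℤˣ) (m : ℕ) :
      (stripTriangle φ γ m : Set ℂ).InjOn (((δ : ℤ) : ℝ) • Complex.imLm) := fun x hx y hy h =>
    injOn_im_stripTriangle hφ hφ₀ γ m hx hy (mul_left_cancel₀ (by simp) h)
  refine ⟨((δ : ℤ) : ℝ) • Complex.imLm, fun x hx y hy => ?_, hinj _ _, hinj _ _⟩
  have hx' := units_mul_im_nonneg hφ hx
  push_cast at hx'
  exact (by linarith : (δ : ℝ) * x.im ≤ 0).trans (units_mul_im_nonneg hφ hy)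

theorem separated_stripTriangle (hφ : |φ| < π / 6) (hφ₀ : sin φ ≠ 0) (h : (ε, k) ≠ (δ, l)) :
    Separated (stripTriangle φ ε k : Set ℂ) (stripTriangle φ δ l) := by
  obtain hkl | rfl | hlk := lt_trichotomy k l
  · exact separated_stripTriangle_of_lt hφ ε δ hkl
  · exact separated_stripTriangle_of_ne hφ hφ₀ (by rintro rfl; exact h rfl) k k
  · exact (separated_stripTriangle_of_lt hφ δ ε hlk).symm

/-- The strip of `2 * n` triangles, symmetric about the real axis. -/
def strip (φ : ℝ) (n : ℕ) : UnitDistGraph :=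
  ofTriangles (fun i : ℤˣ × Fin n => stripTriangle φ i.1 i.2)
    fun i => pairwise_dist_stripTriangle φ i.1 i.2

theorem pairwise_separated_stripTriangle (hφ : |φ| < π / 6) (hφ₀ : sin φ ≠ 0) (n : ℕ) :
    Pairwise fun i j : ℤˣ × Fin n =>
      Separated (stripTriangle φ i.1 i.2 : Set ℂ) (stripTriangle φ j.1 j.2) :=
  fun _ _ hij => separated_stripTriangle hφ hφ₀ fun h =>
    hij (Prod.ext (Prod.mk.inj h).1 (Fin.ext (Prod.mk.inj h).2))

theorem strip_planar (hφ : |φ| < π / 6) (hφ₀ : sin φ ≠ 0) (n : ℕ) : (strip φ n).Planar :=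
  planar_ofTriangles (fun i => card_stripTriangle hφ i.1 i.2)
    (pairwise_separated_stripTriangle hφ hφ₀ n)

theorem strip_onlyUnitTriangles (hφ : |φ| < π / 6) (n : ℕ) : (strip φ n).OnlyUnitTriangles :=
  onlyUnitTriangles_ofTriangles fun i => card_stripTriangle hφ i.1 i.2

theorem triangleCount_strip (hφ : |φ| < π / 6) (hφ₀ : sin φ ≠ 0) (n : ℕ) :
    (strip φ n).triangleCount = 2 * n := by
  suffices (strip φ n).triangleCount = Fintype.card (ℤˣ × Fin n) by simpa using this
  refine triangleCount_ofTriangles (fun i => card_stripTriangle hφ i.1 i.2)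
    (pairwise_separated_stripTriangle hφ hφ₀ n) ?_
  rintro ⟨ε, k⟩ ⟨δ, l⟩ ⟨γ, m⟩ hεδ hδγ hεγ
  have h₁ := eq_or_of_not_disjoint_stripTriangle hφ hεδ
  have h₂ := eq_or_of_not_disjoint_stripTriangle hφ hδγ
  have h₃ := eq_or_of_not_disjoint_stripTriangle hφ hεγ
  simp only [Prod.mk.injEq, Fin.ext_iff]
  rcases Int.units_eq_one_or ε with rfl | rfl <;> rcases Int.units_eq_one_or δ with rfl | rfl <;>
    rcases Int.units_eq_one_or γ with rfl | rfl <;> simp at h₁ h₂ h₃ ⊢ <;> lia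

theorem degree_strip (hφ : |φ| < π / 6) (hφ₀ : sin φ ≠ 0) (n : ℕ) (v : ℂ) :
    (strip φ n).degree v =
      2 * ({i | v ∈ stripTriangle φ i.1 i.2} : Finset (ℤˣ × Fin n)).card :=
  degree_ofTriangles (t := fun i : ℤˣ × Fin n => stripTriangle φ i.1 i.2)
    (fun i => card_stripTriangle hφ i.1 i.2) (pairwise_separated_stripTriangle hφ hφ₀ n) v

theorem degree_hinge (hφ : |φ| < π / 6) (hφ₀ : sin φ ≠ 0) (ε : ℤˣ) (hn : 0 < n) (hk : k ≤ n) :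
    (strip φ n).degree (hinge φ ε k) = if k = 0 ∨ k = n then 2 else 4 := by
  have hset : ({i | hinge φ ε k ∈ stripTriangle φ i.1 i.2} : Finset (ℤˣ × Fin n)) =
      {ε} ×ˢ ({l | k = l ∨ k = l + 1} : Finset (Fin n)) := by
    ext ⟨δ, l⟩
    simp [hinge_mem_stripTriangle hφ, eq_comm (a := ε), and_comm]
  have hcard : ({l | k = l ∨ k = l + 1} : Finset (Fin n)).card =
      if k = 0 ∨ k = n then 1 else 2 := by
    split_ifs with h
    · refine Finset.card_eq_one.2 ⟨⟨if k = 0 then 0 else n - 1, by grind⟩, ?_⟩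
      ext l
      grind
    · refine Finset.card_eq_two.2 ⟨⟨k - 1, by lia⟩, ⟨k, by lia⟩, by grind, ?_⟩
      ext l
      grind
  rw [degree_strip hφ hφ₀, hset, Finset.card_product, hcard, Finset.card_singleton]
  split_ifs <;> rfl

theorem degree_apex (hφ : |φ| < π / 6) (hφ₀ : sin φ ≠ 0) (hk : k < n) :
    (strip φ n).degree (apex φ k) = 4 := by
  have hset : ({i | apex φ k ∈ stripTriangle φ i.1 i.2} : Finset (ℤˣ × Fin n)) =
      Finset.univ ×ˢ {⟨k, hk⟩} := by
    ext ⟨ε, l⟩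
    simp only [apex_mem_stripTriangle hφ, Finset.mem_filter, Finset.mem_univ, true_and,
      Finset.mem_product, Finset.mem_singleton, Fin.ext_iff, eq_comm (a := k)]
  rw [degree_strip hφ hφ₀, hset]
  simp

theorem mem_V_strip (hn : 0 < n) :
    v ∈ (strip φ n).V ↔ (∃ ε, ∃ k ≤ n, v = hinge φ ε k) ∨ ∃ k < n, v = apex φ k := by
  rw [strip, mem_V_ofTriangles]
  simp only [stripTriangle, Finset.mem_insert, Finset.mem_singleton]
  constructor
  · rintro ⟨⟨ε, k⟩, h | h | h⟩
    · exact .inl ⟨ε, k, k.2.le, h⟩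
    · exact .inl ⟨ε, k + 1, k.2, h⟩
    · exact .inr ⟨k, k.2, h⟩
  · rintro (⟨ε, k, hk, h⟩ | ⟨k, hk, h⟩)
    · obtain hk | rfl := hk.lt_or_eq
      · exact ⟨(ε, ⟨k, hk⟩), .inl h⟩
      · exact ⟨(ε, ⟨k - 1, by lia⟩), .inr (.inl (by rwa [Nat.sub_add_cancel hn]))⟩
    · exact ⟨(1, ⟨k, hk⟩), .inr (.inr h)⟩

theorem mem_V_strip_and_degree_eq_two_iff (hφ : |φ| < π / 6) (hφ₀ : sin φ ≠ 0) (hn : 0 < n) :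
    v ∈ (strip φ n).V ∧ (strip φ n).degree v = 2 ↔ ∃ ε, v = hinge φ ε 0 ∨ v = hinge φ ε n := by
  constructor
  · rintro ⟨hv, hdeg⟩
    obtain ⟨ε, k, hk, rfl⟩ | ⟨k, hk, rfl⟩ := (mem_V_strip hn).1 hv
    · rw [degree_hinge hφ hφ₀ ε hn hk] at hdeg
      obtain rfl | rfl : k = 0 ∨ k = n := by simpa [or_iff_not_imp_left] using hdeg
      exacts [⟨ε, .inl rfl⟩, ⟨ε, .inr rfl⟩]
    · simp [degree_apex hφ hφ₀ hk] at hdeg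
  · rintro ⟨ε, rfl | rfl⟩
    · exact ⟨(mem_V_strip hn).2 (.inl ⟨ε, 0, hn.le, rfl⟩), by simp [degree_hinge hφ hφ₀ ε hn hn.le]⟩
    · exact ⟨(mem_V_strip hn).2 (.inl ⟨ε, n, le_rfl, rfl⟩), by simp [degree_hinge hφ hφ₀ ε hn]⟩

theorem degree_strip_eq_two_or_four (hφ : |φ| < π / 6) (hφ₀ : sin φ ≠ 0) (hn : 0 < n)
    (hv : v ∈ (strip φ n).V) : (strip φ n).degree v = 2 ∨ (strip φ n).degree v = 4 := by
  obtain ⟨ε, k, hk, rfl⟩ | ⟨k, hk, rfl⟩ := (mem_V_strip hn).1 hv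
  · rw [degree_hinge hφ hφ₀ ε hn hk]
    split_ifs <;> simp
  · exact .inr (degree_apex hφ hφ₀ hk)

theorem units_mul_im_of_mem_stripTriangle_of_ne_hinge (hφ : |φ| < π / 6)
    (hk : hinge φ ε k ∈ stripTriangle φ δ l) (hx : x ∈ stripTriangle φ δ l)
    (hne : hinge φ ε k ≠ x) :
    ((ε : ℤ) : ℝ) * x.im = 0 ∨ ((ε : ℤ) : ℝ) * x.im = sin (baseAngle φ (k + 1)) := by
  obtain ⟨rfl, hkl⟩ := (hinge_mem_stripTriangle hφ).1 hk
  simp only [stripTriangle, Finset.mem_insert, Finset.mem_singleton] at hx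
  obtain rfl | rfl | rfl := hx
  · obtain rfl : k = l + 1 := hkl.resolve_left fun h => hne (h ▸ rfl)
    exact .inr (by rw [units_mul_im_hinge, add_assoc, baseAngle_add_two])
  · obtain rfl : k = l := hkl.resolve_right fun h => hne (h ▸ rfl)
    exact .inr (units_mul_im_hinge φ ε (k + 1))
  · exact .inl (mul_zero _)

theorem re_of_mem_stripTriangle_of_ne_apex (hφ : |φ| < π / 6)
    (hk : apex φ k ∈ stripTriangle φ δ l) (hx : x ∈ stripTriangle φ δ l) (hne : apex φ k ≠ x) :
    x.re = k * cos φ ∨ x.re = (k + 1) * cos φ := by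
  obtain rfl := (apex_mem_stripTriangle hφ).1 hk
  simp only [stripTriangle, Finset.mem_insert, Finset.mem_singleton] at hx
  obtain rfl | rfl | rfl := hx
  · exact .inl rfl
  · exact .inr (by simp [hinge])
  · exact absurd rfl hne

theorem hinge_sub_ne_sub_hinge (hφ : |φ| < π / 6) (hφ₀ : sin φ ≠ 0)
    (hx : {hinge φ ε k, x} ∈ (strip φ n).E) (hy : {hinge φ ε k, y} ∈ (strip φ n).E) :
    hinge φ ε k - x ≠ y - hinge φ ε k := by
  intro h
  obtain ⟨hzx, i, hzi, hxi⟩ := pair_mem_E_ofTriangles.1 hx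
  obtain ⟨hzy, j, hzj, hyj⟩ := pair_mem_E_ofTriangles.1 hy
  have him := congrArg (fun z : ℂ => ((ε : ℤ) : ℝ) * z.im) h
  simp only [Complex.sub_im, mul_sub, units_mul_im_hinge] at him
  have hsin := half_lt_sin_baseAngle hφ k
  have hsin' := sin_le_one (baseAngle φ (k + 1))
  have hne := sin_baseAngle_succ_ne hφ₀ k
  obtain hx | hx := units_mul_im_of_mem_stripTriangle_of_ne_hinge hφ hzi hxi hzx <;>
    obtain hy | hy := units_mul_im_of_mem_stripTriangle_of_ne_hinge hφ hzj hyj hzy <;>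
    rw [hx, hy] at him
  · linarith
  · linarith
  · linarith
  · exact hne (by linarith)

theorem apex_sub_ne_sub_apex (hφ : |φ| < π / 6) (hφ₀ : sin φ ≠ 0)
    (hx : {apex φ k, x} ∈ (strip φ n).E) (hy : {apex φ k, y} ∈ (strip φ n).E) :
    apex φ k - x ≠ y - apex φ k := by
  intro h
  obtain ⟨hzx, i, hzi, hxi⟩ := pair_mem_E_ofTriangles.1 hx
  obtain ⟨hzy, j, hzj, hyj⟩ := pair_mem_E_ofTriangles.1 hy
  have hre : k * cos φ + cos (baseAngle φ k) - x.re = y.re - (k * cos φ + cos (baseAngle φ k)) :=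
    congrArg Complex.re h
  have hcos := cos_baseAngle_pos hφ k
  have hcos' := cos_baseAngle_lt hφ k
  have hsum := cos_baseAngle_add_cos_baseAngle_succ φ k
  have hne := cos_baseAngle_succ_ne hφ₀ k
  obtain hx | hx := re_of_mem_stripTriangle_of_ne_apex hφ hzi hxi hzx <;>
    obtain hy | hy := re_of_mem_stripTriangle_of_ne_apex hφ hzj hyj hzy <;>
    rw [hx, hy] at hre
  · linarith
  · exact hne (by linarith)
  · exact hne (by linarith)
  · linarith

theorem strip_noStraightAngle (hφ : |φ| < π / 6) (hφ₀ : sin φ ≠ 0) (hn : 0 < n) :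
    (strip φ n).NoStraightAngle := by
  intro x z y hx hy
  obtain ⟨ε, k, -, rfl⟩ | ⟨k, -, rfl⟩ :=
    (mem_V_strip hn).1 ((strip φ n).edge_sub _ hx (Finset.mem_insert_self z {x}))
  · exact hinge_sub_ne_sub_hinge hφ hφ₀ hx hy
  · exact apex_sub_ne_sub_apex hφ hφ₀ hx hy

end Strip

section Rotation

open Real ComplexConjugate

variable {c α : ℝ} {z : ℂ} {s : Set ℂ}

theorem mem_line_exp_iff {c : ℂ} :
    z ∈ line c (Complex.exp (α * Complex.I)) ↔ (z - c).re * sin α = (z - c).im * cos α := by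
  constructor
  · rintro ⟨t, rfl⟩
    rw [add_sub_cancel_left, Complex.re_ofReal_mul, Complex.im_ofReal_mul,
      Complex.exp_ofReal_mul_I_re, Complex.exp_ofReal_mul_I_im]
    ring
  · intro h
    refine ⟨(z - c).re * cos α + (z - c).im * sin α, sub_eq_iff_eq_add'.1 (Complex.ext ?_ ?_)⟩
    · rw [Complex.re_ofReal_mul, Complex.exp_ofReal_mul_I_re]
      linear_combination -(z - c).re * sin_sq_add_cos_sq α + sin α * h
    · rw [Complex.im_ofReal_mul, Complex.exp_ofReal_mul_I_im]
      linear_combination -(z - c).im * sin_sq_add_cos_sq α - cos α * h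

theorem conj_mem_line_exp_iff :
    conj z ∈ line c (Complex.exp (α * Complex.I)) ↔
      z ∈ line c (Complex.exp ((-α : ℝ) * Complex.I)) := by
  simp only [mem_line_exp_iff, Complex.sub_re, Complex.sub_im, Complex.conj_re, Complex.conj_im,
    Complex.ofReal_re, Complex.ofReal_im, sin_neg, cos_neg, sub_zero, mul_neg, neg_mul]
  rw [eq_neg_iff_add_eq_zero, neg_eq_iff_add_eq_zero]

theorem rot_two_mul_of_mem_line (hz : z ∈ line c (Complex.exp ((-α : ℝ) * Complex.I))) :
    rot c (2 * α) z = conj z := by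
  obtain ⟨t, rfl⟩ := hz
  have hexp : Complex.exp ((2 * α : ℝ) * Complex.I) * Complex.exp ((-α : ℝ) * Complex.I) =
      Complex.exp (α * Complex.I) := by
    rw [← Complex.exp_add]
    congr 1
    push_cast
    ring
  simp only [rot, map_add, map_mul, Complex.conj_ofReal, ← Complex.exp_conj, Complex.conj_I,
    add_sub_cancel_left]
  rw [mul_left_comm, hexp]
  simp

theorem rot_two_mul_image_inter_line (hs : ∀ z, conj z ∈ s ↔ z ∈ s) :
    rot c (2 * α) '' (s ∩ line c (Complex.exp ((-α : ℝ) * Complex.I))) =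
      s ∩ line c (Complex.exp (α * Complex.I)) := by
  rw [Set.image_congr fun z hz => rot_two_mul_of_mem_line hz.2]
  ext z
  constructor
  · rintro ⟨w, ⟨hws, hw⟩, rfl⟩
    exact ⟨(hs w).2 hws, conj_mem_line_exp_iff.2 hw⟩
  · rintro ⟨hzs, hz⟩
    refine ⟨conj z, ⟨(hs z).2 hzs, ?_⟩, Complex.conj_conj z⟩
    rwa [← conj_mem_line_exp_iff, Complex.conj_conj]

theorem rot_two_mul_image_line :
    rot c (2 * α) '' line c (Complex.exp ((-α : ℝ) * Complex.I)) =
      line c (Complex.exp (α * Complex.I)) := by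
  simpa using rot_two_mul_image_inter_line (s := Set.univ) (c := c) (α := α) (by simp)

theorem line_exp_neg_ne_line_exp {c : ℂ} (hα : sin (2 * α) ≠ 0) :
    line c (Complex.exp ((-α : ℝ) * Complex.I)) ≠ line c (Complex.exp (α * Complex.I)) := by
  intro h
  have hmem : c + Complex.exp (α * Complex.I) ∈ line c (Complex.exp (α * Complex.I)) :=
    ⟨1, by simp⟩
  rw [← h, mem_line_exp_iff, add_sub_cancel_left, Complex.exp_ofReal_mul_I_re,
    Complex.exp_ofReal_mul_I_im, sin_neg, cos_neg] at hmem
  exact hα (by rw [sin_two_mul]; linarith)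

end Rotation

section Existence

open Real ComplexConjugate

variable {φ α : ℝ} {k n : ℕ}

theorem conj_hinge (φ : ℝ) (ε : ℤˣ) (k : ℕ) : conj (hinge φ ε k) = hinge φ (-ε) k := by
  simp [hinge, Complex.ext_iff]

theorem conj_mem_V_and_degree_eq_two_iff (hφ : |φ| < π / 6) (hφ₀ : sin φ ≠ 0) (hn : 0 < n)
    (v : ℂ) :
    conj v ∈ (strip φ n).V ∧ (strip φ n).degree (conj v) = 2 ↔
      v ∈ (strip φ n).V ∧ (strip φ n).degree v = 2 := by
  have key {v : ℂ} (hv : v ∈ (strip φ n).V ∧ (strip φ n).degree v = 2) :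
      conj v ∈ (strip φ n).V ∧ (strip φ n).degree (conj v) = 2 := by
    rw [mem_V_strip_and_degree_eq_two_iff hφ hφ₀ hn] at hv ⊢
    obtain ⟨ε, rfl | rfl⟩ := hv
    exacts [⟨-ε, .inl (conj_hinge φ ε 0)⟩, ⟨-ε, .inr (conj_hinge φ ε n)⟩]
  exact ⟨fun h => Complex.conj_conj v ▸ key h, key⟩

/-- The point where the line of slope `tan α` through the end `hinge φ 1 0` of the strip meets the
axis. -/
def stripCenter (φ α : ℝ) : ℝ := -(sin (baseAngle φ 0) / tan α)

theorem hinge_zero_mem_line (hα : sin α ≠ 0) :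
    hinge φ 1 0 ∈ line (stripCenter φ α) (Complex.exp (α * Complex.I)) := by
  rw [mem_line_exp_iff]
  simp only [hinge, stripCenter, tan_eq_sin_div_cos, Complex.sub_re, Complex.sub_im,
    Complex.ofReal_re, Complex.ofReal_im]
  push_cast
  field_simp
  ring

theorem hinge_mem_line_of_odd (hα : sin α ≠ 0) (hα' : cos α ≠ 0) (hn : Odd n)
    (hφα : sin φ = n * tan α * cos φ) :
    hinge φ 1 n ∈ line (stripCenter φ α) (Complex.exp (α * Complex.I)) := by
  have hsin : sin (baseAngle φ n) = sin (baseAngle φ 0) + sin φ := by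
    rw [sin_baseAngle, sin_baseAngle, hn.neg_one_pow]
    ring
  rw [mem_line_exp_iff]
  simp only [hinge, stripCenter, Complex.sub_re, Complex.sub_im, Complex.ofReal_re,
    Complex.ofReal_im, hsin, hφα, tan_eq_sin_div_cos]
  push_cast
  field_simp
  ring

theorem hinge_mem_line_union_line
    (h : hinge φ 1 k ∈ line (stripCenter φ α) (Complex.exp (α * Complex.I))) (ε : ℤˣ) :
    hinge φ ε k ∈ line (stripCenter φ α) (Complex.exp ((-α : ℝ) * Complex.I)) ∪
      line (stripCenter φ α) (Complex.exp (α * Complex.I)) := by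
  obtain rfl | rfl := Int.units_eq_one_or ε
  · exact .inr h
  · exact .inl (by rwa [← conj_mem_line_exp_iff, conj_hinge, neg_neg])

theorem exists_tilt (hn : 0 < n) (hα : 0 < tan α) (hnα : n * tan α < tan (π / 6)) :
    ∃ φ, |φ| < π / 6 ∧ sin φ ≠ 0 ∧ sin φ = n * tan α * cos φ := by
  have hpos : 0 < n * tan α := mul_pos (Nat.cast_pos.2 hn) hα
  have hφ : sin (arctan (n * tan α)) = n * tan α * cos (arctan (n * tan α)) := by
    rw [← tan_mul_cos (cos_arctan_pos _).ne', tan_arctan]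
  refine ⟨arctan (n * tan α), ?_, ?_, hφ⟩
  · rw [abs_of_pos (arctan_pos.2 hpos),
      ← arctan_tan (x := π / 6) (by linarith [pi_pos]) (by linarith [pi_pos])]
    exact arctan_strictMono hnα
  · exact hφ ▸ (mul_pos hpos (cos_arctan_pos _)).ne'

end Existence

end UnitDistGraph

open Real in
theorem exists_planar_subgraph_G2_general {n : ℕ} (hn : Odd n) {α : ℝ} (hα : 0 < α)
    (hα' : α < π / 2) (hnα : n * tan α < tan (π / 6)) :
    ∃ G : UnitDistGraph, ∃ c d₁ d₂ : ℂ, d₁ ≠ 0 ∧ d₂ ≠ 0 ∧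
      UnitDistGraph.line c d₁ ≠ UnitDistGraph.line c d₂ ∧
      G.Planar ∧ G.OnlyUnitTriangles ∧ G.NoAdditionalTriangles ∧
      G.triangleCount = 2 * n ∧
      (∀ v ∈ G.V, G.degree v = 2 ∨ G.degree v = 4) ∧
      (UnitDistGraph.rot c (2 * α)) '' UnitDistGraph.line c d₁ = UnitDistGraph.line c d₂ ∧
      (∀ v ∈ G.V, G.degree v = 2 →
        v ∈ UnitDistGraph.line c d₁ ∪ UnitDistGraph.line c d₂) ∧
      (UnitDistGraph.rot c (2 * α)) ''
          {v : ℂ | v ∈ G.V ∧ G.degree v = 2 ∧ v ∈ UnitDistGraph.line c d₁} =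
        {v : ℂ | v ∈ G.V ∧ G.degree v = 2 ∧ v ∈ UnitDistGraph.line c d₂} := by
  have hsin : 0 < sin α := sin_pos_of_pos_of_lt_pi hα (by linarith)
  have hcos : 0 < cos α := cos_pos_of_mem_Ioo ⟨by linarith, hα'⟩
  obtain ⟨φ, hφ, hφ₀, hφα⟩ := exists_tilt hn.pos (tan_pos_of_pos_of_lt_pi_div_two hα hα') hnα
  have hP := strip_planar hφ hφ₀ n
  refine ⟨strip φ n, stripCenter φ α, Complex.exp ((-α : ℝ) * Complex.I),
    Complex.exp (α * Complex.I), Complex.exp_ne_zero _, Complex.exp_ne_zero _,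
    line_exp_neg_ne_line_exp (sin_pos_of_pos_of_lt_pi (by linarith) (by linarith)).ne', hP,
    strip_onlyUnitTriangles hφ n, (strip_noStraightAngle hφ hφ₀ hn.pos).noAdditionalTriangles hP,
    triangleCount_strip hφ hφ₀ n, fun v hv => degree_strip_eq_two_or_four hφ hφ₀ hn.pos hv,
    rot_two_mul_image_line, fun v hv hdeg => ?_, ?_⟩
  · obtain ⟨ε, rfl | rfl⟩ := (mem_V_strip_and_degree_eq_two_iff hφ hφ₀ hn.pos).1 ⟨hv, hdeg⟩
    · exact hinge_mem_line_union_line (hinge_zero_mem_line hsin.ne') ε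
    · exact hinge_mem_line_union_line (hinge_mem_line_of_odd hsin.ne' hcos.ne' hn hφα) ε
  · simp only [← and_assoc]
    exact rot_two_mul_image_inter_line (conj_mem_V_and_degree_eq_two_iff hφ hφ₀ hn.pos)

open Real in
theorem nineteen_mul_tan_lt : 19 * tan (π / 169) < tan (π / 6) := by
  have hsin : 19 * sin (π / 169) < sin (π / 6) := by
    rw [sin_pi_div_six]
    linarith [sin_lt (by positivity : 0 < π / 169), pi_lt_d2]
  have hcos : cos (π / 6) < cos (π / 169) :=
    cos_lt_cos_of_nonneg_of_le_pi_div_two (by positivity) (by linarith [pi_pos])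
      (by linarith [pi_pos])
  rw [tan_eq_sin_div_cos, tan_eq_sin_div_cos, ← mul_div_assoc]
  exact div_lt_div₀ hsin hcos.le (by simp) (by simp)

open Real in
/-- There exists a finite planar straight-line unit-distance
graph with exactly 38 unit triangles, in which every edge lies in a unit
triangle, with no additional triangles, all vertex degrees equal to 2 or 4,
and two distinct lines `g₁`, `g₂` through a common point `c`, meeting at the
angle `2π/169` (the rotation about `c` by `2π/169` maps `g₁` onto `g₂`), such
that every degree-2 vertex lies on `g₁ ∪ g₂` and this rotation maps the set of
degree-2 vertices on `g₁` bijectively onto the set of degree-2 vertices on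
`g₂`. -/
theorem exists_planar_subgraph_G2 :
    ∃ G : UnitDistGraph, ∃ c d₁ d₂ : ℂ, d₁ ≠ 0 ∧ d₂ ≠ 0 ∧
      UnitDistGraph.line c d₁ ≠ UnitDistGraph.line c d₂ ∧
      G.Planar ∧ G.OnlyUnitTriangles ∧ G.NoAdditionalTriangles ∧
      G.triangleCount = 38 ∧
      (∀ v ∈ G.V, G.degree v = 2 ∨ G.degree v = 4) ∧
      (UnitDistGraph.rot c (2 * π / 169)) '' UnitDistGraph.line c d₁ =
        UnitDistGraph.line c d₂ ∧
      (∀ v ∈ G.V, G.degree v = 2 →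
        v ∈ UnitDistGraph.line c d₁ ∪ UnitDistGraph.line c d₂) ∧
      (UnitDistGraph.rot c (2 * π / 169)) ''
          {v : ℂ | v ∈ G.V ∧ G.degree v = 2 ∧ v ∈ UnitDistGraph.line c d₁} =
        {v : ℂ | v ∈ G.V ∧ G.degree v = 2 ∧ v ∈ UnitDistGraph.line c d₂} := by
  have h := exists_planar_subgraph_G2_general (n := 19) (by decide) (by positivity : 0 < π / 169)
    (by linarith [pi_pos]) (by exact_mod_cast nineteen_mul_tan_lt)
  rwa [← mul_div_assoc] at h
end
end

section
/- There exists a finite 4-regular straight-line unit-distance graph in the Euclidean plane, built from exactly 3800 = 100·38 unit triangles whose interiors are pairwise disjoint (non-overlapping, vertex-to-vertex unit triangles), such that every edge is contained in a unit triangle, there are no additional triangles, and the graph is invariant under rotation by 2π/100 about some center (a rigid ring graph with rotational symmetry of order 100). This graph need not be planar: a vertex may lie in the relative interior of an edge. -/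
/-!
Straight-line unit-distance graphs in the Euclidean plane, modelled as ℂ.
-/

noncomputable section
open scoped Classical

open UnitDistGraph

/-!
Put `φ = π / n`. In a sector of angle `φ`, two zigzag ladders of unit triangles, one along each
wall, have their first and their last vertex in common, ten steps of the lower ladder matching nine
steps of the upper one. Hence their 19 triangles form a closed chain, and the third vertices of the
triangles lie on the walls. The reflections in the two walls generate a dihedral group of order
`2 * n`, which spreads the chain over `2 * n` sectors, neighbouring sectors meeting at the third
vertices, so that every vertex belongs to exactly two of the `38 * n` triangles. Suitable lines
separate the triangles, and a side made of several edges is impossible because the edges of two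
triangles at a common vertex never differ by a multiple of `π / 3` in direction.
-/

namespace RingGraph

/-! ### Systems of unit triangles -/

/-- Two sets whose convex hulls have at most one common point: the way in which distinct
triangles of a ring graph may touch. -/
def MeetAtMostOnce {E : Type*} [AddCommGroup E] [Module ℝ E] (s t : Set E) : Prop :=
  (convexHull ℝ s ∩ convexHull ℝ t).Subsingleton

theorem MeetAtMostOnce.symm {E : Type*} [AddCommGroup E] [Module ℝ E] {s t : Set E}
    (h : MeetAtMostOnce s t) : MeetAtMostOnce t s := by
  rwa [MeetAtMostOnce, Set.inter_comm]

/-- A family of unit triangles in which every vertex belongs to exactly two triangles. Edges of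
two triangles at a common vertex never differ by a multiple of `π / 3` in direction, which is
encoded by comparing sixth powers of the edge vectors. -/
structure TriangleSystem (I : Type*) where
  tri : I → Finset ℂ
  card_tri : ∀ i, (tri i).card = 3
  dist_eq_one : ∀ {i u v}, u ∈ tri i → v ∈ tri i → u ≠ v → dist u v = 1
  meetAtMostOnce : ∀ {i l}, i ≠ l → MeetAtMostOnce (tri i : Set ℂ) (tri l)
  not_aligned : ∀ {i l u v w}, i ≠ l → v ∈ tri i → v ∈ tri l → u ∈ tri i → w ∈ tri l →
    u ≠ v → w ≠ v → (u - v) ^ 6 ≠ (w - v) ^ 6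
  exists_other : ∀ {i v}, v ∈ tri i → ∃ j, j ≠ i ∧ v ∈ tri j ∧ ∀ l, v ∈ tri l → l = i ∨ l = j

theorem pow_six_eq_of_norm_sub_eq {u v : ℂ} (huv : ‖u‖ = ‖v‖) (h : ‖u - v‖ = ‖u‖) :
    u ^ 6 = v ^ 6 := by
  rcases eq_or_ne u 0 with rfl | hu
  · rw [norm_zero, eq_comm, norm_eq_zero] at huv
    rw [huv]
  have hv : v ≠ 0 := norm_ne_zero_iff.1 (huv ▸ norm_ne_zero_iff.2 hu)
  have normSq_eq (z : ℂ) : z * (starRingEnd ℂ) z = (‖z‖ : ℂ) ^ 2 := Complex.mul_conj' z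
  have h₁ := normSq_eq u
  have h₂ := normSq_eq v
  have h₃ := normSq_eq (u - v)
  rw [← huv] at h₂
  rw [h, map_sub] at h₃
  have cyclotomic : u ^ 2 - u * v + v ^ 2 = 0 := by
    refine (mul_eq_zero.1 ?_).resolve_right
      (mul_ne_zero ((map_ne_zero (starRingEnd ℂ)).2 hu) ((map_ne_zero (starRingEnd ℂ)).2 hv))
    linear_combination (u * (starRingEnd ℂ) v - v * (starRingEnd ℂ) v) * h₁
      + (v * (starRingEnd ℂ) u - ‖u‖ ^ 2) * h₂ + (‖u‖ : ℂ) ^ 2 * (h₁ + h₂ - h₃)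
  linear_combination (u + v) * (u ^ 3 - v ^ 3) * cyclotomic

theorem exists_mem_Ioc_of_cover {A : Set ℝ} (hA : A.Finite) (hA₀ : ∀ a ∈ A, 0 ≤ a) {L : ℝ}
    (hL : 1 < L) (cover : ∀ t ∈ Set.Icc 0 L, ∃ a ∈ A, t ∈ Set.Icc a (a + 1)) :
    ∃ a ∈ A, ∃ b ∈ A, b ∈ Set.Ioc a (a + 1) := by
  obtain ⟨a, ha, ha', -⟩ := cover 0 ⟨le_rfl, by linarith⟩
  obtain rfl : a = 0 := le_antisymm ha' (hA₀ a ha)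
  obtain ⟨l, hl, -, hl'⟩ := cover L ⟨by linarith, le_rfl⟩
  obtain ⟨b, ⟨hb, hb₀⟩, hmin⟩ := Set.exists_min_image {b ∈ A | 0 < b} id
    (hA.subset (Set.sep_subset _ _)) ⟨l, hl, by linarith⟩
  refine ⟨0, ha, b, hb, hb₀, le_of_not_gt fun hb₁ ↦ ?_⟩
  obtain ⟨t, ht₁, ht⟩ := exists_between (lt_min (by linarith : 1 < b) hL)
  obtain ⟨c, hc, hct, htc⟩ := cover t ⟨by linarith, (ht.trans_le (min_le_right _ _)).le⟩
  have hbc : b ≤ c := hmin c ⟨hc, by linarith⟩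
  linarith [ht.trans_le (min_le_left b L)]

theorem segment_add_smul {E : Type*} [AddCommGroup E] [Module ℝ E] (x u : E) {a b : ℝ}
    (hab : a ≤ b) : segment ℝ (x + a • u) (x + b • u) = (fun t : ℝ ↦ x + t • u) '' Set.Icc a b := by
  have hline : (fun t : ℝ ↦ x + t • u) = (AffineMap.lineMap x (x + u) : ℝ →ᵃ[ℝ] E) := by
    funext t
    rw [AffineMap.lineMap_apply, vsub_eq_sub, add_sub_cancel_left, vadd_eq_add, add_comm]
  rw [hline, ← segment_eq_Icc hab, image_segment, ← hline]

theorem exists_edge_of_sideCovered (G : UnitDistGraph) {x u : ℂ} (hu : ‖u‖ = 1)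
    {L : ℝ} (h : G.SideCovered x (x + L • u)) {t : ℝ} (ht : t ∈ Set.Icc 0 L) :
    ∃ a : ℝ, 0 ≤ a ∧ a + 1 ≤ L ∧ t ∈ Set.Icc a (a + 1) ∧
      {x + a • u, x + (a + 1) • u} ∈ G.E := by
  obtain ⟨S, hS, hcover⟩ := h
  have hseg := segment_add_smul x u (ht.1.trans ht.2)
  rw [zero_smul, add_zero, hcover] at hseg
  have hu₀ : u ≠ 0 := norm_ne_zero_iff.1 (by rw [hu]; exact one_ne_zero)
  have hinj : Function.Injective fun t : ℝ ↦ x + t • u :=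
    (add_right_injective x).comp (smul_left_injective ℝ hu₀)
  obtain ⟨e, he, hte⟩ := Set.mem_iUnion₂.1 (hseg.ge ⟨t, ht, rfl⟩)
  obtain ⟨p, q, -, rfl, hdist⟩ := G.edge_pair e (hS he)
  have mem_line {z : ℂ} (hz : z ∈ ({p, q} : Finset ℂ)) :
      z ∈ (fun t : ℝ ↦ x + t • u) '' Set.Icc 0 L :=
    hseg.le (Set.mem_iUnion₂.2 ⟨_, he, subset_convexHull ℝ _ hz⟩)
  obtain ⟨a, ha, rfl⟩ := mem_line (by simp : p ∈ _)
  obtain ⟨b, hb, rfl⟩ := mem_line (by simp : q ∈ _)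
  clear mem_line
  replace he := hS he
  wlog hab : a ≤ b generalizing a b
  · rw [Finset.pair_comm] at hte he
    rw [dist_comm] at hdist
    exact this b hb a ha hdist hte he (le_of_not_ge hab)
  obtain rfl : b = a + 1 := by
    rw [dist_add_left, dist_eq_norm, ← sub_smul, norm_smul, hu, mul_one, Real.norm_of_nonpos
      (by linarith)] at hdist
    linarith
  refine ⟨a, ha.1, hb.2, ?_, he⟩
  rw [edgeSeg, Finset.coe_pair, convexHull_pair, segment_add_smul x u hab] at hte
  exact (hinj.mem_set_image).1 hte

namespace TriangleSystem

variable {I : Type*} (T : TriangleSystem I)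

theorem eq_of_mem_of_mem {i l : I} {u v : ℂ} (huv : u ≠ v) (hui : u ∈ T.tri i)
    (hvi : v ∈ T.tri i) (hul : u ∈ T.tri l) (hvl : v ∈ T.tri l) : i = l := by
  by_contra h
  exact huv (T.meetAtMostOnce h ⟨subset_convexHull ℝ _ hui, subset_convexHull ℝ _ hul⟩
    ⟨subset_convexHull ℝ _ hvi, subset_convexHull ℝ _ hvl⟩)

theorem tri_injective : Function.Injective T.tri := by
  intro i l h
  obtain ⟨u, hu, v, hv, huv⟩ := Finset.one_lt_card.1 (by rw [T.card_tri i]; norm_num)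
  exact T.eq_of_mem_of_mem huv hu hv (h ▸ hu) (h ▸ hv)

theorem card_union_erase {i j : I} (hij : j ≠ i) {v : ℂ} (hi : v ∈ T.tri i) (hj : v ∈ T.tri j) :
    ((T.tri i ∪ T.tri j).erase v).card = 4 := by
  have hinter : T.tri i ∩ T.tri j = {v} := by
    refine Finset.eq_singleton_iff_unique_mem.2 ⟨Finset.mem_inter.2 ⟨hi, hj⟩, fun u hu ↦ ?_⟩
    by_contra huv
    exact hij (T.eq_of_mem_of_mem huv (Finset.mem_inter.1 hu).2 hj (Finset.mem_inter.1 hu).1 hi)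
  have := Finset.card_union_add_card_inter (T.tri i) (T.tri j)
  rw [hinter, T.card_tri, T.card_tri, Finset.card_singleton] at this
  rw [Finset.card_erase_of_mem (Finset.mem_union_left _ hi)]
  omega

/-- A straight continuation of an edge would be an edge of a second triangle aligned with it. -/
theorem not_mem_of_collinear {i l : I} {p u : ℂ} (hu : ‖u‖ = 1) {s : ℝ} (hs : s ∈ Set.Ioc 0 1)
    (hp : p ∈ T.tri i) (hpu : p + u ∈ T.tri i) (hl : p + s • u ∈ T.tri l) :
    p + (s + 1) • u ∉ T.tri l := by
  intro hl'
  have hu₀ : u ≠ 0 := norm_ne_zero_iff.1 (by rw [hu]; exact one_ne_zero)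
  have mem_hull {k : I} {q r x : ℂ} (hq : q ∈ T.tri k) (hr : r ∈ T.tri k)
      (hx : x ∈ segment ℝ q r) : x ∈ convexHull ℝ (T.tri k : Set ℂ) :=
    (convex_convexHull ℝ _).segment_subset (subset_convexHull ℝ _ hq) (subset_convexHull ℝ _ hr) hx
  rcases eq_or_ne i l with rfl | hil
  · have hdist : dist (p + (s + 1) • u) p = s + 1 := by
      rw [dist_eq_norm, add_sub_cancel_left, norm_smul, hu, mul_one, Real.norm_of_nonneg]
      linarith [hs.1]
    have hne : p + (s + 1) • u ≠ p := by
      rw [← dist_ne_zero, hdist]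
      linarith [hs.1]
    linarith [hs.1, T.dist_eq_one hl' hp hne]
  have hmid : p + s • u ∈ segment ℝ p (p + u) :=
    ⟨1 - s, s, by linarith [hs.2], hs.1.le, by ring,
      by simp only [Complex.real_smul]; push_cast; ring⟩
  have hend : p + u ∈ segment ℝ (p + s • u) (p + (s + 1) • u) :=
    ⟨s, 1 - s, hs.1.le, by linarith [hs.2], by ring,
      by simp only [Complex.real_smul]; push_cast; ring⟩
  have heq : p + u = p + s • u := T.meetAtMostOnce hil
    ⟨subset_convexHull ℝ _ hpu, mem_hull hl hl' hend⟩
    ⟨mem_hull hp hpu hmid, subset_convexHull ℝ _ hl⟩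
  obtain rfl : s = 1 := by
    have : (1 : ℂ) * u = s * u := by simpa [Complex.real_smul] using heq
    exact_mod_cast (mul_right_cancel₀ hu₀ this).symm
  have htwo : p + (1 + 1 : ℝ) • u - (p + u) = u := by rw [add_smul, one_smul]; ring
  refine T.not_aligned hil hpu (heq ▸ hl) hp hl' (by simpa using hu₀) ?_ ?_
  · rw [ne_eq, ← sub_eq_zero, htwo]
    exact hu₀
  · rw [htwo]
    ring

variable [Fintype I]

/-- The unit-distance graph formed by the vertices and the edges of the triangles. -/
def graph : UnitDistGraph where
  V := Finset.univ.biUnion T.tri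
  E := Finset.univ.biUnion fun i ↦ (T.tri i).powersetCard 2
  edge_sub e he := by
    obtain ⟨i, -, hi⟩ := Finset.mem_biUnion.1 he
    exact (Finset.mem_powersetCard.1 hi).1.trans
      (Finset.subset_biUnion_of_mem _ (Finset.mem_univ i))
  edge_pair e he := by
    obtain ⟨i, -, hi⟩ := Finset.mem_biUnion.1 he
    obtain ⟨hsub, hcard⟩ := Finset.mem_powersetCard.1 hi
    obtain ⟨x, y, hxy, rfl⟩ := Finset.card_eq_two.1 hcard
    exact ⟨x, y, hxy, rfl, T.dist_eq_one (hsub (by simp)) (hsub (by simp)) hxy⟩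

theorem mem_V {v : ℂ} : v ∈ T.graph.V ↔ ∃ i, v ∈ T.tri i := by simp [graph]

theorem mem_E {e : Finset ℂ} : e ∈ T.graph.E ↔ ∃ i, e ⊆ T.tri i ∧ e.card = 2 := by
  simp [graph, Finset.mem_powersetCard]

theorem pair_mem_E {u v : ℂ} (huv : u ≠ v) :
    {u, v} ∈ T.graph.E ↔ ∃ i, u ∈ T.tri i ∧ v ∈ T.tri i := by
  simp [mem_E, Finset.card_pair huv, Finset.insert_subset_iff]

theorem isUnitTriangle_iff {t : Finset ℂ} : T.graph.IsUnitTriangle t ↔ ∃ i, T.tri i = t := by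
  constructor
  · rintro ⟨-, hcard, hedge⟩
    obtain ⟨x, y, z, hxy, hxz, hyz, rfl⟩ := Finset.card_eq_three.1 hcard
    obtain ⟨i, hxi, hyi⟩ := (T.pair_mem_E hxy).1 (hedge x (by simp) y (by simp) hxy)
    obtain ⟨l, hyl, hzl⟩ := (T.pair_mem_E hyz).1 (hedge y (by simp) z (by simp) hyz)
    obtain ⟨m, hxm, hzm⟩ := (T.pair_mem_E hxz).1 (hedge x (by simp) z (by simp) hxz)
    rcases eq_or_ne i l with rfl | hil
    · refine ⟨i, (Finset.eq_of_subset_of_card_le ?_ ?_).symm⟩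
      · simp [Finset.insert_subset_iff, hxi, hyi, hzl]
      · rw [hcard, T.card_tri]
    · refine absurd (pow_six_eq_of_norm_sub_eq ?_ ?_)
        (T.not_aligned hil hyi hyl hxi hzl hxy hyz.symm)
      · rw [← dist_eq_norm, ← dist_eq_norm, T.dist_eq_one hxi hyi hxy,
          T.dist_eq_one hzl hyl hyz.symm]
      · rw [sub_sub_sub_cancel_right, ← dist_eq_norm, ← dist_eq_norm, T.dist_eq_one hxi hyi hxy,
          T.dist_eq_one hxm hzm hxz]
  · rintro ⟨i, rfl⟩
    exact ⟨fun v hv ↦ T.mem_V.2 ⟨i, hv⟩, T.card_tri i,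
      fun x hx y hy hxy ↦ (T.pair_mem_E hxy).2 ⟨i, hx, hy⟩⟩

theorem regular4 : T.graph.Regular4 := by
  intro v hv
  obtain ⟨i, hi⟩ := T.mem_V.1 hv
  obtain ⟨j, hij, hj, hother⟩ := T.exists_other hi
  have edges_eq : {e | e ∈ T.graph.E ∧ v ∈ e} =
      (fun u ↦ ({v, u} : Finset ℂ)) '' ((T.tri i ∪ T.tri j).erase v : Finset ℂ) := by
    ext e
    constructor
    · rintro ⟨he, hve⟩
      obtain ⟨l, hsub, hcard⟩ := T.mem_E.1 he
      obtain ⟨u, hu⟩ := Finset.card_eq_one.1 ((Finset.card_erase_of_mem hve).trans (by rw [hcard]))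
      obtain rfl : insert v {u} = e := by rw [← hu, Finset.insert_erase hve]
      have huv : u ≠ v := Finset.ne_of_mem_erase (hu ▸ Finset.mem_singleton_self u)
      refine ⟨u, ?_, rfl⟩
      rcases hother l (hsub hve) with rfl | rfl <;> simp [huv, hsub (by simp : u ∈ {v, u})]
    · rintro ⟨u, hu, rfl⟩
      obtain ⟨huv, hu⟩ := Finset.mem_erase.1 hu
      refine ⟨(T.pair_mem_E huv.symm).2 ?_, by simp⟩
      rcases Finset.mem_union.1 hu with hu | hu
      exacts [⟨i, hi, hu⟩, ⟨j, hj, hu⟩]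
  have pair_injOn : Set.InjOn (fun u ↦ ({v, u} : Finset ℂ))
      ((T.tri i ∪ T.tri j).erase v : Finset ℂ) := by
    intro u hu w _ h
    have huw : u ∈ (fun u ↦ ({v, u} : Finset ℂ)) w := by rw [← h]; simp
    simpa [Finset.ne_of_mem_erase hu] using huw
  rw [degree, edges_eq, pair_injOn.ncard_image, Set.ncard_coe_finset,
    T.card_union_erase hij hi hj]

theorem nonOverlapping : T.graph.NonOverlapping := by
  intro t₁ t₂ h₁ h₂ hne
  obtain ⟨i, rfl⟩ := T.isUnitTriangle_iff.1 h₁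
  obtain ⟨l, rfl⟩ := T.isUnitTriangle_iff.1 h₂
  have hil : i ≠ l := fun h ↦ hne (h ▸ rfl)
  rw [← interior_inter]
  rcases (T.meetAtMostOnce hil).eq_empty_or_singleton with h | ⟨x, h⟩
  · rw [h, interior_empty]
  · rw [h, interior_singleton]

theorem onlyUnitTriangles : T.graph.OnlyUnitTriangles := by
  intro e he
  obtain ⟨i, hsub, -⟩ := T.mem_E.1 he
  exact ⟨T.tri i, T.isUnitTriangle_iff.2 ⟨i, rfl⟩, hsub⟩

theorem triangleCount : T.graph.triangleCount = Fintype.card I := by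
  have : {t | T.graph.IsUnitTriangle t} = Set.range T.tri :=
    Set.ext fun t ↦ T.isUnitTriangle_iff
  rw [UnitDistGraph.triangleCount, this, ← Set.image_univ,
    Set.ncard_image_of_injective _ T.tri_injective, Set.ncard_univ, Nat.card_eq_fintype_card]

theorem dist_eq_one_of_sideCovered {x y : ℂ} (hxy : x ≠ y) (h : T.graph.SideCovered x y) :
    dist x y = 1 := by
  obtain ⟨u, L, hu, hL, rfl⟩ : ∃ u : ℂ, ∃ L : ℝ, ‖u‖ = 1 ∧ 0 < L ∧ x + L • u = y := by
    have hne : ‖y - x‖ ≠ 0 := norm_ne_zero_iff.2 (sub_ne_zero.2 hxy.symm)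
    refine ⟨‖y - x‖⁻¹ • (y - x), ‖y - x‖, ?_, by positivity, ?_⟩
    · rw [norm_smul, norm_inv, norm_norm, inv_mul_cancel₀ hne]
    · rw [smul_inv_smul₀ hne, add_sub_cancel]
  have hdist : dist x (x + L • u) = L := by
    rw [dist_self_add_right, norm_smul, hu, mul_one, Real.norm_of_nonneg hL.le]
  have hinj : Function.Injective fun t : ℝ ↦ x + t • u :=
    (add_right_injective x).comp
      (smul_left_injective ℝ (norm_ne_zero_iff.1 (by rw [hu]; exact one_ne_zero)))
  let A : Set ℝ := {a | 0 ≤ a ∧ ∃ i, x + a • u ∈ T.tri i ∧ x + (a + 1) • u ∈ T.tri i}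
  have cover {t : ℝ} (ht : t ∈ Set.Icc 0 L) : ∃ a ∈ A, a + 1 ≤ L ∧ t ∈ Set.Icc a (a + 1) := by
    obtain ⟨a, ha, haL, hta, hE⟩ := exists_edge_of_sideCovered T.graph hu h ht
    exact ⟨a, ⟨ha, (T.pair_mem_E (hinj.ne (by simp))).1 hE⟩, haL, hta⟩
  have hA : A.Finite := (T.graph.V.finite_toSet.preimage hinj.injOn).subset
    fun a ⟨_, i, hi, _⟩ ↦ T.mem_V.2 ⟨i, hi⟩
  rw [hdist]
  by_contra hne
  have hL₁ : 1 < L := by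
    obtain ⟨a, ha, haL, -⟩ := cover ⟨le_rfl, hL.le⟩
    exact lt_of_le_of_ne (by linarith [ha.1]) (Ne.symm hne)
  obtain ⟨a, ⟨-, i, hi, hi'⟩, b, ⟨-, l, hl, hl'⟩, hab⟩ :=
    exists_mem_Ioc_of_cover hA (fun a ha ↦ ha.1) hL₁ fun t ht ↦
      (cover ht).imp fun _ h ↦ ⟨h.1, h.2.2⟩
  refine T.not_mem_of_collinear (l := l) hu (s := b - a) ⟨by linarith [hab.1], by linarith [hab.2]⟩
    hi ?_ ?_ ?_
  · rwa [add_smul, one_smul, ← add_assoc] at hi'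
  · rwa [add_assoc, ← add_smul, add_sub_cancel]
  · rwa [add_assoc, ← add_smul, ← add_assoc, add_sub_cancel]

theorem noAdditionalTriangles : T.graph.NoAdditionalTriangles :=
  fun _ _ _ _ _ _ hxy _ _ _ _ h _ _ ↦ T.dist_eq_one_of_sideCovered hxy h

theorem rotInvariant {c : ℂ} {θ : ℝ} (σ : I ≃ I)
    (hσ : ∀ i, (T.tri i).image (rot c θ) = T.tri (σ i)) : T.graph.RotInvariant c θ := by
  have rot_injective : Function.Injective (rot c θ) := fun z w h ↦ by
    simpa [rot, Complex.exp_ne_zero] using h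
  constructor
  · ext v
    simp only [Set.mem_image, Finset.mem_coe, mem_V]
    constructor
    · rintro ⟨u, ⟨i, hu⟩, rfl⟩
      exact ⟨σ i, hσ i ▸ Finset.mem_image_of_mem _ hu⟩
    · rintro ⟨l, hv⟩
      rw [← σ.apply_symm_apply l, ← hσ] at hv
      obtain ⟨u, hu, rfl⟩ := Finset.mem_image.1 hv
      exact ⟨u, ⟨_, hu⟩, rfl⟩
  · ext e
    simp only [Set.mem_image, Finset.mem_coe, mem_E]
    constructor
    · rintro ⟨e, ⟨i, hsub, hcard⟩, rfl⟩
      exact ⟨σ i, hσ i ▸ Finset.image_subset_image hsub,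
        (Finset.card_image_of_injective _ rot_injective).trans hcard⟩
    · rintro ⟨l, hsub, hcard⟩
      rw [← σ.apply_symm_apply l, ← hσ] at hsub
      obtain ⟨e, he, rfl⟩ := Finset.subset_image_iff.1 hsub
      exact ⟨e, ⟨_, mod_cast he, (Finset.card_image_of_injective _ rot_injective).symm.trans hcard⟩,
        rfl⟩

end TriangleSystem

/-! ### Separation by lines -/

theorem convex_insert_lt {E : Type*} [AddCommGroup E] [Module ℝ E] (f : E →ₗ[ℝ] ℝ) {c : ℝ} {d : E}
    (hd : c ≤ f d) : Convex ℝ (insert d {x | c < f x}) := by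
  refine convex_iff_pairwise_pos.2 fun x hx y hy hxy a b ha hb hab ↦ Or.inr ?_
  have hc : c = a * c + b * c := by rw [← add_mul, hab, one_mul]
  simp only [Set.mem_ofPred_eq, map_add, map_smul, smul_eq_mul]
  rcases hx with rfl | (hx : c < f x) <;> rcases hy with rfl | (hy : c < f y)
  · exact absurd rfl hxy
  all_goals nlinarith

theorem convexHull_subset_insert_lt {E : Type*} [AddCommGroup E] [Module ℝ E] (f : E →ₗ[ℝ] ℝ)
    {c : ℝ} {d : E} (hd : c ≤ f d) {s : Set E} (hs : ∀ x ∈ s, x ≠ d → c < f x) :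
    convexHull ℝ s ⊆ insert d {x | c < f x} :=
  convexHull_min (fun x hx ↦ or_iff_not_imp_left.2 (hs x hx)) (convex_insert_lt f hd)

theorem meetAtMostOnce_of_separated {E : Type*} [AddCommGroup E] [Module ℝ E] (f : E →ₗ[ℝ] ℝ)
    {c : ℝ} {d : E} (hd : c ≤ f d) {s t : Set E} (hs : ∀ x ∈ s, f x ≤ c)
    (ht : ∀ x ∈ t, x ≠ d → c < f x) : MeetAtMostOnce s t := by
  refine Set.subsingleton_of_subset_singleton (a := d) fun x ⟨hxs, hxt⟩ ↦ ?_
  have hx : f x ≤ c := convexHull_min hs (convex_halfSpace_le f.isLinear c) hxs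
  exact (convexHull_subset_insert_lt f hd ht hxt).resolve_right hx.not_gt

open Real

/-- The unit vector of direction `θ`. -/
abbrev cis (θ : ℝ) : ℂ := Complex.exp (θ * Complex.I)

theorem cis_add (x y : ℝ) : cis (x + y) = cis x * cis y := by
  rw [cis, Complex.ofReal_add, add_mul, Complex.exp_add]

theorem conj_cis (x : ℝ) : starRingEnd ℂ (cis x) = cis (-x) := by
  simp [cis, ← Complex.exp_conj]

theorem eq_of_cis_pow_six_eq {x y : ℝ} (hx : |x| < π / 6) (hy : |y| < π / 6)
    (h : cis x ^ 6 = cis y ^ 6) : x = y := by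
  rw [← Complex.exp_nat_mul, ← Complex.exp_nat_mul, Complex.exp_eq_exp_iff_exists_int] at h
  obtain ⟨n, hn⟩ := h
  replace hn : 6 * x = 6 * y + n * (2 * π) := by
    have := congrArg Complex.im hn
    simpa using this
  obtain ⟨hx₁, hx₂⟩ := abs_lt.1 hx
  obtain ⟨hy₁, hy₂⟩ := abs_lt.1 hy
  have hn₁ : (n : ℝ) < 1 := by nlinarith
  have hn₂ : (-1 : ℝ) < n := by nlinarith
  obtain rfl : n = 0 := by
    have : n < 1 := by exact_mod_cast hn₁
    have : -1 < n := by exact_mod_cast hn₂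
    omega
  norm_num at hn
  exact hn

/-- The signed distance of a point to the right of the line through `0` of direction `ψ`. -/
def sideDist (ψ : ℝ) : ℂ →ₗ[ℝ] ℝ := sin ψ • Complex.reLm - cos ψ • Complex.imLm

theorem sideDist_apply (ψ : ℝ) (z : ℂ) : sideDist ψ z = sin ψ * z.re - cos ψ * z.im := rfl

theorem sideDist_cis (ψ x : ℝ) : sideDist ψ (cis x) = sin (ψ - x) := by
  rw [sideDist_apply, Complex.exp_ofReal_mul_I_re, Complex.exp_ofReal_mul_I_im, sin_sub]

/-! ### The dihedral group acting on a sector -/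

/-- The closed sector between the real axis and the ray of direction `φ`, without its apex. -/
def sector (φ : ℝ) : Set ℂ := {z | 0 < z.re ∧ 0 ≤ z.im ∧ 0 ≤ sideDist φ z}

/-- The open sector between the real axis and the ray of direction `φ`. -/
def openSector (φ : ℝ) : Set ℂ := {z | 0 < z.re ∧ 0 < z.im ∧ 0 < sideDist φ z}

theorem openSector_subset_sector (φ : ℝ) : openSector φ ⊆ sector φ :=
  fun _ ⟨hre, him, hside⟩ ↦ ⟨hre, him.le, hside.le⟩

theorem convexHull_subset_insert_openSector {φ : ℝ} {d : ℂ} (hd : d ∈ sector φ) {s : Set ℂ}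
    (hs : ∀ x ∈ s, x ≠ d → x ∈ openSector φ) : convexHull ℝ s ⊆ insert d (openSector φ) := by
  intro x hx
  rw [Set.mem_insert_iff, or_iff_not_imp_left]
  intro hxd
  exact ⟨(convexHull_subset_insert_lt Complex.reLm hd.1.le (fun y hy h ↦ (hs y hy h).1)
      hx).resolve_left hxd,
    (convexHull_subset_insert_lt Complex.imLm hd.2.1 (fun y hy h ↦ (hs y hy h).2.1)
      hx).resolve_left hxd,
    (convexHull_subset_insert_lt (sideDist φ) hd.2.2 (fun y hy h ↦ (hs y hy h).2.2)
      hx).resolve_left hxd⟩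

theorem exists_eq_norm_mul_cis {φ : ℝ} (hφ : 0 ≤ φ) {z : ℂ} (hz : z ∈ sector φ) :
    ∃ α ∈ Set.Icc 0 φ, z = ‖z‖ * cis α := by
  obtain ⟨hre, him, hside⟩ := hz
  have hpolar : z = ‖z‖ * cis z.arg := (Complex.norm_mul_exp_arg_mul_I z).symm
  refine ⟨z.arg, ⟨Complex.arg_nonneg_iff.2 him, ?_⟩, hpolar⟩
  have harg := abs_lt.1 (Complex.abs_arg_lt_pi_div_two_iff.2 (Or.inl hre))
  have hnorm : 0 < ‖z‖ := norm_pos_iff.2 fun h ↦ by simp [h] at hre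
  rw [hpolar, ← Complex.real_smul, map_smul, sideDist_cis, smul_eq_mul] at hside
  by_contra! hlt
  exact (mul_neg_of_pos_of_neg hnorm (sin_neg_of_neg_of_neg_pi_lt (by linarith)
    (by linarith))).not_ge hside

section act

variable {n : ℕ} [NeZero n]

/-- The dihedral group of order `2 * n` acting on the plane by the symmetries of the regular
`n`-gon that is centred at `0` and has a vertex on the real axis. -/
def act : DihedralGroup n →* (ℂ ≃ₗᵢ[ℝ] ℂ) where
  toFun
    | .r i => rotation (ZMod.toCircle i)
    | .sr i => Complex.conjLIE * rotation (ZMod.toCircle i)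
  map_one' := by
    change rotation (ZMod.toCircle 0) = 1
    rw [AddChar.map_zero_eq_one, map_one]
  map_mul' := by
    rintro (i | i) (j | j) <;> ext z <;>
      simp [AddChar.map_add_eq_mul, sub_eq_neg_add, AddChar.map_neg_eq_inv, Circle.coe_inv_eq_conj,
        mul_assoc, -map_inv, -Circle.coe_inv]

theorem act_r (i : ZMod n) (z : ℂ) : act (.r i) z = ZMod.toCircle i * z := rfl

theorem act_sr (i : ZMod n) (z : ℂ) :
    act (.sr i) z = starRingEnd ℂ (ZMod.toCircle i * z) := rfl

theorem act_mul (γ δ : DihedralGroup n) (z : ℂ) : act (γ * δ) z = act γ (act δ z) := by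
  rw [map_mul, LinearIsometryEquiv.coe_mul, Function.comp_apply]

theorem act_pow_eq_iff (γ : DihedralGroup n) (k : ℕ) {u v : ℂ} :
    act γ u ^ k = act γ v ^ k ↔ u ^ k = v ^ k := by
  rcases γ with i | i
  · simp [act_r, mul_pow]
  · rw [act_sr, act_sr, ← map_pow, ← map_pow, (starRingEnd ℂ).injective.eq_iff]
    simp [mul_pow]

theorem toCircle_intCast_eq_cis (k : ℤ) :
    (ZMod.toCircle (k : ZMod n) : ℂ) = cis (2 * (π / n) * k) := by
  rw [ZMod.toCircle_intCast, cis]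
  push_cast
  ring_nf

theorem exists_intCast_eq_of_toCircle_mul_cis_eq {i : ZMod n} {x y : ℝ}
    (h : ZMod.toCircle i * cis x = cis y) :
    ∃ k : ℤ, (k : ZMod n) = i ∧ 2 * (π / n) * k + x = y := by
  obtain ⟨k, rfl⟩ := ZMod.intCast_surjective i
  rw [toCircle_intCast_eq_cis, ← cis_add, Complex.exp_eq_exp_iff_exists_int] at h
  obtain ⟨m, hm⟩ := h
  replace hm : 2 * (π / n) * k + x = y + m * (2 * π) := by
    simpa using congrArg Complex.im hm
  have hn : (n : ℝ) ≠ 0 := NeZero.ne _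
  refine ⟨k - n * m, by simp, ?_⟩
  push_cast
  field_simp
  field_simp at hm
  linear_combination hm

theorem eq_of_act_eq {γ : DihedralGroup n} {z w : ℂ} (hz : z ∈ sector (π / n))
    (hw : w ∈ sector (π / n)) (h : act γ z = w) : z = w ∧
      (γ = 1 ∨ γ = .sr 0 ∧ z.im = 0 ∨ γ = .sr (-1) ∧ sideDist (π / n) z = 0) := by
  have hφ : 0 < π / n := div_pos pi_pos (Nat.cast_pos.2 (NeZero.pos n))
  obtain ⟨α, ⟨hα, hαφ⟩, hzα⟩ := exists_eq_norm_mul_cis hφ.le hz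
  obtain ⟨β, ⟨hβ, hβφ⟩, hwβ⟩ := exists_eq_norm_mul_cis hφ.le hw
  have hnorm : ‖w‖ = ‖z‖ := by rw [← h, LinearIsometryEquiv.norm_map]
  have hz₀ : (‖z‖ : ℂ) ≠ 0 :=
    Complex.ofReal_ne_zero.2 (norm_ne_zero_iff.2 fun h ↦ by simp [h, sector] at hz)
  rw [hnorm] at hwβ
  have hzw (hαβ : α = β) : z = w := by rw [hzα, hwβ, hαβ]
  rcases γ with i | i
  · rw [act_r, hzα, hwβ, mul_left_comm] at h
    obtain ⟨k, rfl, hk⟩ := exists_intCast_eq_of_toCircle_mul_cis_eq (mul_left_cancel₀ hz₀ h)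
    have hk₁ : (k : ℝ) < 1 := by nlinarith
    have hk₂ : (-1 : ℝ) < k := by nlinarith
    norm_cast at hk₁ hk₂
    obtain rfl : k = 0 := by omega
    rw [Int.cast_zero, mul_zero, zero_add] at hk
    exact ⟨hzw hk, Or.inl (by simp)⟩
  · replace h : ZMod.toCircle i * z = starRingEnd ℂ w := by rw [← h, act_sr, Complex.conj_conj]
    rw [hzα, hwβ, map_mul, Complex.conj_ofReal, conj_cis, mul_left_comm] at h
    obtain ⟨k, rfl, hk⟩ := exists_intCast_eq_of_toCircle_mul_cis_eq (mul_left_cancel₀ hz₀ h)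
    have hk₁ : (k : ℝ) < 1 := by nlinarith
    have hk₂ : (-2 : ℝ) < k := by nlinarith
    norm_cast at hk₁ hk₂
    obtain rfl | rfl : k = 0 ∨ k = -1 := by omega
    · obtain ⟨rfl, rfl⟩ : α = 0 ∧ β = 0 := by
        rw [Int.cast_zero, mul_zero, zero_add] at hk
        constructor <;> linarith
      refine ⟨hzw rfl, Or.inr (Or.inl ⟨by simp, ?_⟩)⟩
      rw [hzα]
      simp
    · obtain ⟨rfl, rfl⟩ : α = π / n ∧ β = π / n := by
        push_cast at hk
        constructor <;> linarith
      refine ⟨hzw rfl, Or.inr (Or.inr ⟨by simp, ?_⟩)⟩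
      rw [hzα, ← Complex.real_smul, map_smul, sideDist_cis, sub_self, sin_zero, smul_zero]

end act

/-! ### Ladders -/

/-- A zigzag of unit segments whose directions alternate between `axis - tilt` and `axis + tilt`,
starting at `base`, with a unit triangle on each segment; the triangles lie to the left of the
zigzag if `side = π / 3` and to its right if `side = -π / 3`. -/
structure Ladder where
  base : ℂ
  axis : ℝ
  tilt : ℝ
  side : ℝ
  axis_nonneg : 0 ≤ axis
  tilt_pos : 0 < tilt
  axis_add_tilt_lt : axis + tilt < π / 6
  abs_side : |side| = π / 3

namespace Ladder

variable (L : Ladder)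

/-- The direction of the `j`-th segment. -/
def dir (j : ℕ) : ℝ := if Even j then L.axis - L.tilt else L.axis + L.tilt

/-- The `j`-th point of the zigzag. -/
def node (j : ℕ) : ℂ := L.base + ∑ k ∈ Finset.range j, cis (L.dir k)

/-- The apex of the triangle on the `j`-th segment. -/
def tip (j : ℕ) : ℂ := L.node j + cis (L.dir j + L.side)

/-- The triangle on the `j`-th segment. -/
def tri (j : ℕ) : Finset ℂ := {L.node j, L.node (j + 1), L.tip j}

variable {L}

theorem dir_even {j : ℕ} (hj : Even j) : L.dir j = L.axis - L.tilt := if_pos hj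

theorem dir_odd {j : ℕ} (hj : ¬Even j) : L.dir j = L.axis + L.tilt := if_neg hj

theorem mem_tri {j : ℕ} {v : ℂ} :
    v ∈ L.tri j ↔ v = L.node j ∨ v = L.node (j + 1) ∨ v = L.tip j := by
  simp [tri]

variable (L)

theorem abs_dir_lt (j : ℕ) : |L.dir j| < π / 6 := by
  have := L.axis_nonneg
  have := L.tilt_pos
  have := L.axis_add_tilt_lt
  rw [dir, abs_lt]
  split_ifs <;> constructor <;> linarith

theorem two_mul_axis_sub_dir (j : ℕ) : 2 * L.axis - L.dir j = L.dir (j + 1) := by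
  by_cases hj : Even j
  · rw [dir_even hj, dir_odd (by simpa [Nat.even_add_one] using hj)]
    ring
  · rw [dir_odd hj, dir_even (by simpa [Nat.even_add_one] using hj)]
    ring

theorem dir_ne_dir_succ (j : ℕ) : L.dir j ≠ L.dir (j + 1) := by
  have := L.tilt_pos
  rw [← two_mul_axis_sub_dir, dir]
  split_ifs <;> intro h <;> linarith

theorem node_zero : L.node 0 = L.base := by simp [node]

theorem node_succ (j : ℕ) : L.node (j + 1) = L.node j + cis (L.dir j) := by
  rw [node, Finset.sum_range_succ, ← add_assoc, node]

theorem node_two_mul (m : ℕ) :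
    L.node (2 * m) = L.base + m • (cis (L.dir 0) + cis (L.dir 1)) := by
  induction m with
  | zero => simp [node_zero]
  | succ m ih =>
    have hdir : L.dir (2 * m) = L.dir 0 ∧ L.dir (2 * m + 1) = L.dir 1 := by simp [dir]
    rw [mul_add_one, node_succ, node_succ, ih, hdir.1, hdir.2, succ_nsmul, add_assoc, add_assoc]

theorem node_re_lt_tip_re (j : ℕ) : (L.node j).re < (L.tip j).re := by
  have hdir := abs_lt.1 (L.abs_dir_lt j)
  have hside := abs_le.1 L.abs_side.le
  rw [tip, Complex.add_re, Complex.exp_ofReal_mul_I_re]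
  linarith [cos_pos_of_mem_Ioo (x := L.dir j + L.side) ⟨by linarith, by linarith⟩]

theorem tip_re_lt_node_succ_re (j : ℕ) : (L.tip j).re < (L.node (j + 1)).re := by
  have hdir := L.abs_dir_lt j
  have hsum := abs_add_le (L.dir j) L.side
  have hside : |L.side| ≤ |L.dir j + L.side| + |L.dir j| := by
    simpa using abs_sub (L.dir j + L.side) (L.dir j)
  rw [L.abs_side] at hsum hside
  rw [tip, node_succ, Complex.add_re, Complex.add_re, Complex.exp_ofReal_mul_I_re,
    Complex.exp_ofReal_mul_I_re, ← cos_abs, ← cos_abs (L.dir j)]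
  gcongr
  exact cos_lt_cos_of_nonneg_of_le_pi (abs_nonneg _) (by linarith [pi_pos]) (by linarith)

theorem node_re_strictMono : StrictMono fun j ↦ (L.node j).re :=
  strictMono_nat_of_lt_succ fun j ↦ (L.node_re_lt_tip_re j).trans (L.tip_re_lt_node_succ_re j)

theorem tip_re_strictMono : StrictMono fun j ↦ (L.tip j).re :=
  strictMono_nat_of_lt_succ fun j ↦ (L.tip_re_lt_node_succ_re j).trans (L.node_re_lt_tip_re _)

theorem meetAtMostOnce_of_re_le {L L' : Ladder} {i j : ℕ}
    (h : (L.node (i + 1)).re ≤ (L'.node j).re) :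
    MeetAtMostOnce (L.tri i : Set ℂ) (L'.tri j) := by
  refine meetAtMostOnce_of_separated Complex.reLm (d := L'.node j) le_rfl (fun x hx ↦ ?_)
    fun x hx hne ↦ ?_
  · refine le_trans ?_ h
    rcases mem_tri.1 hx with rfl | rfl | rfl
    exacts [(L.node_re_strictMono i.lt_add_one).le, le_rfl, (L.tip_re_lt_node_succ_re i).le]
  · rcases mem_tri.1 hx with rfl | rfl | rfl
    exacts [absurd rfl hne, L'.node_re_strictMono j.lt_add_one, L'.node_re_lt_tip_re j]

theorem tri_meetAtMostOnce_tri {i j : ℕ} (hij : i ≠ j) :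
    MeetAtMostOnce (L.tri i : Set ℂ) (L.tri j) := by
  rcases hij.lt_or_gt with h | h
  · exact meetAtMostOnce_of_re_le (L.node_re_strictMono.monotone h)
  · exact (meetAtMostOnce_of_re_le (L.node_re_strictMono.monotone h)).symm

theorem card_tri (j : ℕ) : (L.tri j).card = 3 :=
  Finset.card_eq_three.2 ⟨_, _, _, fun h ↦ (L.node_re_strictMono j.lt_add_one).ne (congrArg _ h),
    fun h ↦ (L.node_re_lt_tip_re j).ne (congrArg _ h),
    fun h ↦ (L.tip_re_lt_node_succ_re j).ne' (congrArg _ h), rfl⟩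

theorem cos_side : cos L.side = 1 / 2 := by
  rw [← cos_abs, L.abs_side, cos_pi_div_three]

theorem cis_side_sq : cis L.side ^ 2 = cis L.side - 1 := by
  have hsin := sin_sq_add_cos_sq L.side
  rw [L.cos_side] at hsin
  apply Complex.ext <;>
    simp only [sq, Complex.mul_re, Complex.mul_im, Complex.sub_re, Complex.sub_im, Complex.one_re,
      Complex.one_im, Complex.exp_ofReal_mul_I_re, Complex.exp_ofReal_mul_I_im, L.cos_side] <;>
    linarith

/-- The sides of a triangle arise from its base by rotations through multiples of `π / 3`. -/
theorem exists_pow_six_sub_eq {j : ℕ} {u v : ℂ} (hu : u ∈ L.tri j) (hv : v ∈ L.tri j)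
    (huv : u ≠ v) : ∃ ζ : ℂ, ζ ^ 6 = 1 ∧ u - v = ζ * cis (L.dir j) := by
  set ω := cis L.side
  have hω : ω ^ 2 = ω - 1 := L.cis_side_sq
  have coord {x : ℂ} (hx : x ∈ L.tri j) :
      ∃ α : ℂ, (α = 0 ∨ α = 1 ∨ α = ω) ∧ x = L.node j + α * cis (L.dir j) := by
    rcases mem_tri.1 hx with rfl | rfl | rfl
    · exact ⟨0, by simp, by ring⟩
    · exact ⟨1, by simp, by rw [node_succ, one_mul]⟩
    · exact ⟨ω, by simp, by rw [tip, cis_add, mul_comm]⟩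
  obtain ⟨α, hα, rfl⟩ := coord hu
  obtain ⟨β, hβ, rfl⟩ := coord hv
  have hαβ : α ≠ β := fun h ↦ huv (h ▸ rfl)
  have hω₃ : ω ^ 3 = -1 := by linear_combination (ω + 1) * hω
  have hω₆ : ω ^ 6 = 1 := by linear_combination (ω ^ 3 - 1) * hω₃
  have hω₆' : (ω - 1) ^ 6 = 1 := by rw [← hω]; linear_combination (ω ^ 6 + 1) * hω₆
  refine ⟨α - β, ?_, by ring⟩
  rcases hα with rfl | rfl | rfl <;> rcases hβ with rfl | rfl | rfl <;>
    first
    | exact absurd rfl hαβ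
    | linear_combination hω₆
    | linear_combination hω₆'
    | norm_num

theorem dist_eq_one {j : ℕ} {u v : ℂ} (hu : u ∈ L.tri j) (hv : v ∈ L.tri j) (huv : u ≠ v) :
    dist u v = 1 := by
  obtain ⟨ζ, hζ, h⟩ := L.exists_pow_six_sub_eq hu hv huv
  rw [dist_eq_norm, h, norm_mul, Complex.norm_eq_one_of_pow_eq_one hζ (by norm_num),
    Complex.norm_exp_ofReal_mul_I, one_mul]

theorem sub_pow_six {j : ℕ} {u v : ℂ} (hu : u ∈ L.tri j) (hv : v ∈ L.tri j) (huv : u ≠ v) :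
    (u - v) ^ 6 = cis (L.dir j) ^ 6 := by
  obtain ⟨ζ, hζ, h⟩ := L.exists_pow_six_sub_eq hu hv huv
  rw [h, mul_pow, hζ, one_mul]

theorem sideDist_node_succ (ψ : ℝ) (j : ℕ) :
    sideDist ψ (L.node (j + 1)) = sideDist ψ (L.node j) + sin (ψ - L.dir j) := by
  rw [node_succ, map_add, sideDist_cis]

theorem sideDist_tip (ψ : ℝ) (j : ℕ) :
    sideDist ψ (L.tip j) = sideDist ψ (L.node j) + sin (ψ - (L.dir j + L.side)) := by
  rw [tip, map_add, sideDist_cis]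

theorem sideDist_node_two_mul (ψ : ℝ) (m : ℕ) : sideDist ψ (L.node (2 * m)) =
    sideDist ψ L.base + m * (2 * sin (ψ - L.axis) * cos L.tilt) := by
  rw [node_two_mul, map_add, map_nsmul, map_add, sideDist_cis, sideDist_cis, nsmul_eq_mul,
    dir_even Even.zero, dir_odd Nat.not_even_one, ← sub_add, ← sub_sub, sin_add (ψ - L.axis),
    sin_sub (ψ - L.axis)]
  ring

theorem sideDist_axis_node (j : ℕ) : sideDist L.axis (L.node j) =
    sideDist L.axis L.base + if Even j then 0 else sin L.tilt := by
  induction j with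
  | zero => simp [node_zero]
  | succ j ih =>
    rw [sideDist_node_succ, ih, dir]
    by_cases hj : Even j <;> simp [hj, Nat.even_add_one]

theorem sideDist_axis_tip (j : ℕ) : sideDist L.axis (L.tip j) =
    sideDist L.axis L.base + sin (L.tilt - L.side) := by
  rw [sideDist_tip, sideDist_axis_node, dir]
  split_ifs
  · rw [add_zero]
    ring_nf
  · rw [show L.axis - (L.axis + L.tilt + L.side) = -(L.tilt + L.side) by ring, sin_neg, sin_add,
      sin_sub, L.cos_side]
    ring

end Ladder

/-! ### The parameters of the ring -/

/-- The tilts `t` and `τ` of the lower and the upper ladder in a sector of angle `φ`. The last two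
conditions say that ten steps of the lower ladder lead to the same point as nine steps of the
upper one. -/
structure RingParams (φ : ℝ) where
  t : ℝ
  τ : ℝ
  φ_pos : 0 < φ
  φ_lt_τ : φ < τ
  τ_add_φ_lt_t : τ + φ < t
  t_lt : t < π / 6
  sin_eq : 5 * sin (τ - φ) = 4 * sin (τ + φ)
  cos_eq : 10 * cos t = 5 * cos (τ - φ) + 4 * cos (τ + φ)

namespace RingParams

theorem cos_lowerTilt_bounds {S C s c x : ℝ} (hC : 0 < C) (hSC : S ^ 2 + C ^ 2 = 1)
    (hS : 1000 * S ^ 2 < 1) (hc : 0 < c) (hsc : s ^ 2 + c ^ 2 = 1) (hrel : s * C = 9 * S * c)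
    (hx : 10 * x = 9 * c * C + s * S) : √3 / 2 < x ∧ x < c * C - s * S := by
  have hxC : 10 * x * C = 9 * c := by linear_combination C * hx + S * hrel + 9 * c * hSC
  have hx₀ : 0 < x := by
    have : 0 < 10 * x := pos_of_mul_pos_left (hxC ▸ by positivity) hC.le
    linarith
  have hcC : c ^ 2 * (1 + 80 * S ^ 2) = C ^ 2 := by
    linear_combination -(s * C + 9 * S * c) * hrel + C ^ 2 * hsc - c ^ 2 * hSC
  have hx_sq : 100 * x ^ 2 * (1 + 80 * S ^ 2) = 81 := by
    refine mul_right_cancel₀ (pow_pos hC 2).ne' ?_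
    linear_combination (1 + 80 * S ^ 2) * (10 * x * C + 9 * c) * hxC + 81 * hcC
  constructor
  · have : √3 < 2 * x := (sqrt_lt' (by linarith)).2 (by nlinarith)
    linarith
  · have : 11 * (s * S) < c * C := by
      refine lt_of_mul_lt_mul_right ?_ hC.le
      calc 11 * (s * S) * C = c * (99 * S ^ 2) := by linear_combination 11 * S * hrel
        _ < c * C ^ 2 := by gcongr; linarith
        _ = c * C * C := by ring
    linarith

/-- The equation `sin_eq` amounts to `tan τ = 9 * tan φ`; then `cos_eq` determines `t`. -/
protected theorem nonempty {φ : ℝ} (hφ₀ : 0 < φ) (hφ₁ : φ < π / 2) (hφ : 1000 * sin φ ^ 2 < 1) :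
    Nonempty (RingParams φ) := by
  have hC : 0 < cos φ := cos_pos_of_mem_Ioo ⟨by linarith, hφ₁⟩
  obtain ⟨τ, hφτ, hτ, hc, hrel⟩ : ∃ τ, φ < τ ∧ τ < π / 2 ∧ 0 < cos τ ∧
      sin τ * cos φ = 9 * sin φ * cos τ := by
    refine ⟨arctan (9 * tan φ), ?_, arctan_lt_pi_div_two _, cos_arctan_pos _, ?_⟩
    · calc φ = arctan (tan φ) := (arctan_tan (by linarith) hφ₁).symm
        _ < arctan (9 * tan φ) :=
          arctan_strictMono (by linarith [tan_pos_of_pos_of_lt_pi_div_two hφ₀ hφ₁])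
    · rw [← tan_mul_cos (cos_arctan_pos _).ne', tan_arctan, ← tan_mul_cos hC.ne']
      ring
  set x := (9 * cos τ * cos φ + sin τ * sin φ) / 10 with hx
  obtain ⟨hx₁, hx₂⟩ := cos_lowerTilt_bounds (x := x) hC (sin_sq_add_cos_sq φ) hφ hc
    (sin_sq_add_cos_sq τ) hrel (by rw [hx]; ring)
  rw [← cos_add] at hx₂
  have hx₃ : x < 1 := hx₂.trans_le (cos_le_one _)
  have hx₀ : 0 < x := hx₁.trans' (by positivity)
  refine ⟨⟨arccos x, τ, hφ₀, hφτ, ?_, ?_, ?_, ?_⟩⟩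
  · rw [← arccos_cos (x := τ + φ) (by linarith) (by linarith)]
    exact arccos_lt_arccos (by linarith) hx₂ (cos_le_one _)
  · rw [← arccos_cos (x := π / 6) (by positivity) (by linarith), cos_pi_div_six]
    exact arccos_lt_arccos (by linarith [sqrt_nonneg 3]) hx₁ hx₃.le
  · rw [sin_sub, sin_add]
    linear_combination hrel
  · rw [cos_arccos (by linarith) hx₃.le, hx, cos_sub, cos_add]
    ring

variable {φ : ℝ} (p : RingParams φ)

/-- The common starting point of the two ladders, chosen such that the tips of the lower ladder lie
on the real axis and those of the upper ladder on the ray of direction `φ`. -/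
def base : ℂ := ⟨(sin (π / 3 + p.t) * cos φ + sin (π / 3 - p.τ)) / sin φ, sin (π / 3 + p.t)⟩

/-- The ladder along the lower wall of the sector. -/
def lower : Ladder where
  base := p.base
  axis := 0
  tilt := p.t
  side := -(π / 3)
  axis_nonneg := le_rfl
  tilt_pos := by linarith [p.φ_pos, p.φ_lt_τ, p.τ_add_φ_lt_t]
  axis_add_tilt_lt := by linarith [p.t_lt]
  abs_side := by rw [abs_neg, abs_of_pos (by positivity)]

/-- The ladder along the upper wall of the sector. -/
def upper : Ladder where
  base := p.base
  axis := φ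
  tilt := p.τ
  side := π / 3
  axis_nonneg := p.φ_pos.le
  tilt_pos := by linarith [p.φ_pos, p.φ_lt_τ]
  axis_add_tilt_lt := by linarith [p.τ_add_φ_lt_t, p.t_lt]
  abs_side := abs_of_pos (by positivity)

theorem lower_dir_even {j : ℕ} (hj : Even j) : p.lower.dir j = -p.t :=
  (Ladder.dir_even hj).trans (zero_sub _)

theorem lower_dir_odd {j : ℕ} (hj : ¬Even j) : p.lower.dir j = p.t :=
  (Ladder.dir_odd hj).trans (zero_add _)

theorem upper_dir_even {j : ℕ} (hj : Even j) : p.upper.dir j = -(p.τ - φ) :=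
  (Ladder.dir_even hj).trans (neg_sub _ _).symm

theorem upper_dir_odd {j : ℕ} (hj : ¬Even j) : p.upper.dir j = p.τ + φ :=
  (Ladder.dir_odd hj).trans (add_comm _ _)

theorem lower_side : p.lower.side = -(π / 3) := rfl

theorem upper_side : p.upper.side = π / 3 := rfl

theorem zero_lt_sub : 0 < p.τ - φ := sub_pos.2 p.φ_lt_τ

theorem sin_sub_pos : 0 < sin (p.τ - φ) :=
  sin_pos_of_pos_of_lt_pi p.zero_lt_sub
    (by linarith [p.φ_pos, p.τ_add_φ_lt_t, p.t_lt, pi_pos])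

theorem sin_sub_lt_sin_t : sin (p.τ - φ) < sin p.t :=
  sin_lt_sin_of_lt_of_le_pi_div_two (by linarith [p.zero_lt_sub, pi_pos])
    (by linarith [p.t_lt, pi_pos]) (by linarith [p.φ_pos, p.τ_add_φ_lt_t])

theorem cos_add_lt_cos_sub : cos (p.τ + φ) < cos (p.τ - φ) :=
  cos_lt_cos_of_nonneg_of_le_pi p.zero_lt_sub.le (by linarith [p.τ_add_φ_lt_t, p.t_lt, pi_pos])
    (by linarith [p.φ_pos])

theorem cos_add_pos : 0 < cos (p.τ + φ) :=
  cos_pos_of_mem_Ioo ⟨by linarith [p.zero_lt_sub, p.φ_pos, pi_pos],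
    by linarith [p.τ_add_φ_lt_t, p.t_lt, pi_pos]⟩

theorem cos_t_pos : 0 < cos p.t := by
  linarith [p.cos_eq, p.cos_add_pos, p.cos_add_lt_cos_sub]

theorem sin_two_mul_eq : sin (2 * p.τ) = 2 * sin (p.τ + φ) * cos p.t := by
  rw [show 2 * p.τ = (p.τ - φ) + (p.τ + φ) by ring, sin_add]
  linear_combination (-sin (p.τ + φ) / 5) * p.cos_eq + (cos (p.τ + φ) / 5) * p.sin_eq

theorem sin_two_mul_pos : 0 < sin (2 * p.τ) :=
  sin_pos_of_pos_of_lt_pi (by linarith [p.zero_lt_sub, p.φ_pos])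
    (by linarith [p.τ_add_φ_lt_t, p.t_lt, p.φ_pos, pi_pos])

theorem t_pos : 0 < p.t := p.lower.tilt_pos

theorem sin_t_pos : 0 < sin p.t := p.sin_sub_pos.trans p.sin_sub_lt_sin_t

theorem sin_t_lt_base_im : sin p.t < p.base.im :=
  sin_lt_sin_of_lt_of_le_pi_div_two (by linarith [p.t_pos, pi_pos]) (by linarith [p.t_lt])
    (by linarith [pi_pos])

theorem φ_lt (p : RingParams φ) : φ < π / 6 := by
  linarith [p.φ_pos, p.φ_lt_τ, p.τ_add_φ_lt_t, p.t_lt]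

theorem sin_φ_pos (p : RingParams φ) : 0 < sin φ :=
  sin_pos_of_pos_of_lt_pi p.φ_pos (by linarith [p.φ_lt, pi_pos])

theorem cos_φ_pos (p : RingParams φ) : 0 < cos φ :=
  cos_pos_of_mem_Ioo ⟨by linarith [p.φ_pos, pi_pos], by linarith [p.φ_lt, pi_pos]⟩

theorem sideDist_base : sideDist φ p.base = sin (π / 3 - p.τ) := by
  rw [sideDist_apply, base, mul_div_cancel₀ _ p.sin_φ_pos.ne']
  ring

theorem sideDist_base_pos : 0 < sideDist φ p.base := by
  rw [sideDist_base]
  exact sin_pos_of_pos_of_lt_pi (by linarith [p.φ_pos, p.τ_add_φ_lt_t, p.t_lt, pi_pos])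
    (by linarith [p.φ_pos, p.φ_lt_τ, pi_pos])

theorem base_re_pos : 0 < p.base.re :=
  div_pos (add_pos (mul_pos (p.sin_t_pos.trans p.sin_t_lt_base_im) p.cos_φ_pos)
    (p.sideDist_base ▸ p.sideDist_base_pos)) p.sin_φ_pos

theorem lower_node_re (j : ℕ) : (p.lower.node j).re = p.base.re + j * cos p.t := by
  induction j with
  | zero => simp [Ladder.node_zero, lower]
  | succ j ih =>
    rw [Ladder.node_succ, Complex.add_re, ih, Complex.exp_ofReal_mul_I_re]
    by_cases hj : Even j
    · rw [p.lower_dir_even hj, cos_neg]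
      push_cast
      ring
    · rw [p.lower_dir_odd hj]
      push_cast
      ring

theorem lower_node_im (j : ℕ) :
    (p.lower.node j).im = p.base.im - if Even j then 0 else sin p.t := by
  have := p.lower.sideDist_axis_node j
  simp only [lower, sideDist_apply, sin_zero, cos_zero] at this
  simp only [lower]
  linarith

theorem upper_node_two_mul (m : ℕ) : p.upper.node (2 * m) =
    ⟨p.base.re + m * (cos (p.τ - φ) + cos (p.τ + φ)), p.base.im + m / 4 * sin (p.τ - φ)⟩ := by
  rw [Ladder.node_two_mul, p.upper_dir_even Even.zero, p.upper_dir_odd Nat.not_even_one]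
  apply Complex.ext
  · rw [Complex.add_re, Complex.re_nsmul, Complex.add_re, Complex.exp_ofReal_mul_I_re,
      Complex.exp_ofReal_mul_I_re, cos_neg, nsmul_eq_mul, upper]
  · rw [Complex.add_im, Complex.im_nsmul, Complex.add_im, Complex.exp_ofReal_mul_I_im,
      Complex.exp_ofReal_mul_I_im, sin_neg, nsmul_eq_mul, upper]
    linear_combination (-m / 4 : ℝ) * p.sin_eq

theorem upper_node_two_mul_add_one (m : ℕ) : p.upper.node (2 * m + 1) =
    ⟨p.base.re + m * (cos (p.τ - φ) + cos (p.τ + φ)) + cos (p.τ - φ),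
      p.base.im + (m / 4 - 1) * sin (p.τ - φ)⟩ := by
  rw [Ladder.node_succ, upper_node_two_mul, p.upper_dir_even (by simp)]
  apply Complex.ext
  · rw [Complex.add_re, Complex.exp_ofReal_mul_I_re, cos_neg]
  · rw [Complex.add_im, Complex.exp_ofReal_mul_I_im, sin_neg]
    ring

theorem lower_node_ten : p.lower.node 10 = p.upper.node 9 := by
  rw [show 9 = 2 * 4 + 1 by rfl, upper_node_two_mul_add_one]
  apply Complex.ext
  · rw [lower_node_re]
    push_cast
    linear_combination p.cos_eq
  · rw [lower_node_im, if_pos (by decide)]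
    norm_num

theorem cos_t_lt_cos_upper_dir (j : ℕ) : cos p.t < cos (p.upper.dir j) := by
  have hdir : |p.upper.dir j| ≤ p.τ + φ := by
    have := p.φ_pos
    have := p.φ_lt_τ
    rw [abs_le]
    by_cases hj : Even j
    · rw [p.upper_dir_even hj]
      constructor <;> linarith
    · rw [p.upper_dir_odd hj]
      constructor <;> linarith
  rw [← cos_abs (p.upper.dir j)]
  exact cos_lt_cos_of_nonneg_of_le_pi (abs_nonneg _) (by linarith [p.t_lt, pi_pos])
    (hdir.trans_lt p.τ_add_φ_lt_t)

theorem lower_node_re_le_upper_node_re (j : ℕ) :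
    (p.lower.node j).re ≤ (p.upper.node j).re := by
  induction j with
  | zero => rw [Ladder.node_zero, Ladder.node_zero, lower, upper]
  | succ j ih =>
    rw [lower_node_re] at ih ⊢
    rw [Ladder.node_succ, Complex.add_re, Complex.exp_ofReal_mul_I_re]
    push_cast
    linarith [p.cos_t_lt_cos_upper_dir j]

theorem lower_node_succ_re_lt_upper_node_succ_re (j : ℕ) :
    (p.lower.node (j + 1)).re < (p.upper.node (j + 1)).re := by
  have := p.lower_node_re_le_upper_node_re j
  rw [lower_node_re] at this ⊢
  rw [Ladder.node_succ, Complex.add_re, Complex.exp_ofReal_mul_I_re]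
  push_cast
  linarith [p.cos_t_lt_cos_upper_dir j]

theorem upper_node_re_lt_lower_node_succ_re {i : ℕ} (hi : i ≤ 8) :
    (p.upper.node i).re < (p.lower.node (i + 1)).re := by
  have := p.cos_add_pos
  have := p.cos_add_lt_cos_sub
  rw [lower_node_re]
  obtain ⟨m, rfl | rfl⟩ := i.even_or_odd'
  · rw [upper_node_two_mul]
    have hm : (m : ℝ) ≤ 4 := by exact_mod_cast (by omega : m ≤ 4)
    push_cast
    nlinarith [p.cos_eq]
  · rw [upper_node_two_mul_add_one]
    have hm : (m : ℝ) ≤ 3 := by exact_mod_cast (by omega : m ≤ 3)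
    push_cast
    nlinarith [p.cos_eq]

theorem lower_node_succ_ne_upper_node {i : ℕ} (hi : i ≤ 8) (j : ℕ) :
    p.lower.node (j + 1) ≠ p.upper.node i := by
  intro h
  rcases lt_or_ge j i with hij | hij
  · have := p.upper.node_re_strictMono.monotone hij
    exact (p.lower_node_succ_re_lt_upper_node_succ_re j).not_ge (h ▸ this)
  · have := p.lower.node_re_strictMono.monotone (add_le_add_left hij 1)
    exact (p.upper_node_re_lt_lower_node_succ_re hi).not_ge (h ▸ this)

theorem sideDist_add_lower_node (m : ℕ) : sideDist (p.τ + φ) (p.lower.node (2 * m)) =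
    sideDist (p.τ + φ) p.base + m * sin (2 * p.τ) := by
  rw [Ladder.sideDist_node_two_mul, sin_two_mul_eq]
  simp only [lower, sub_zero]

theorem sideDist_add_upper_node (m : ℕ) : sideDist (p.τ + φ) (p.upper.node (2 * m)) =
    sideDist (p.τ + φ) p.base + m * sin (2 * p.τ) := by
  rw [Ladder.sideDist_node_two_mul, sin_two_mul]
  simp only [upper, add_sub_cancel_right]

theorem sideDist_upper_tri_even_le {m : ℕ} {x : ℂ} (hx : x ∈ p.upper.tri (2 * m)) :
    sideDist (p.τ + φ) x ≤ sideDist (p.τ + φ) (p.lower.node (2 * m + 2)) := by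
  have hτ := p.sin_two_mul_pos
  have htip : sin (2 * p.τ - π / 3) ≤ 0 :=
    sin_nonpos_of_nonpos_of_neg_pi_le (by linarith [p.τ_add_φ_lt_t, p.t_lt, p.φ_pos])
      (by linarith [p.φ_lt_τ, p.φ_pos, pi_pos])
  rw [← mul_add_one, sideDist_add_lower_node]
  rcases Ladder.mem_tri.1 hx with rfl | rfl | rfl
  · rw [sideDist_add_upper_node]
    push_cast
    linarith
  · rw [Ladder.sideDist_node_succ, sideDist_add_upper_node, p.upper_dir_even (by simp)]
    push_cast
    ring_nf
    exact le_rfl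
  · rw [Ladder.sideDist_tip, sideDist_add_upper_node, p.upper_dir_even (by simp), upper_side,
      show p.τ + φ - (-(p.τ - φ) + π / 3) = 2 * p.τ - π / 3 by ring]
    push_cast
    linarith

theorem sideDist_upper_tri_odd_le {m : ℕ} {x : ℂ} (hx : x ∈ p.upper.tri (2 * m + 1)) :
    sideDist (p.τ + φ) x ≤ sideDist (p.τ + φ) (p.lower.node (2 * m + 2)) := by
  have hnode : sideDist (p.τ + φ) (p.upper.node (2 * m + 1)) =
      sideDist (p.τ + φ) (p.upper.node (2 * m + 2)) := by
    rw [p.upper.sideDist_node_succ _ (2 * m + 1), p.upper_dir_odd (by simp), sub_self, sin_zero,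
      add_zero]
  rw [← mul_add_one, sideDist_add_lower_node, ← sideDist_add_upper_node, mul_add_one, ← hnode]
  rcases Ladder.mem_tri.1 hx with rfl | rfl | rfl
  · exact le_rfl
  · exact hnode.ge
  · rw [Ladder.sideDist_tip, p.upper_dir_odd (by simp), upper_side, sub_add_cancel_left, sin_neg]
    linarith [sin_pos_of_pos_of_lt_pi (x := π / 3) (by positivity) (by linarith [pi_pos])]

theorem lt_sideDist_lower_tri_odd {m : ℕ} {x : ℂ} (hx : x ∈ p.lower.tri (2 * m + 1))
    (hne : x ≠ p.lower.node (2 * m + 2)) :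
    sideDist (p.τ + φ) (p.lower.node (2 * m + 2)) < sideDist (p.τ + φ) x := by
  have hstep : sin (p.τ + φ - p.t) < 0 :=
    sin_neg_of_neg_of_neg_pi_lt (by linarith [p.τ_add_φ_lt_t])
      (by linarith [p.zero_lt_sub, p.φ_pos, p.t_lt, pi_pos])
  have htip : 0 < sin (p.τ + φ - p.t + π / 3) :=
    sin_pos_of_pos_of_lt_pi (by linarith [p.zero_lt_sub, p.φ_pos, p.t_lt, pi_pos])
      (by linarith [p.τ_add_φ_lt_t, pi_pos])
  have hnode := p.lower.sideDist_node_succ (p.τ + φ) (2 * m + 1)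
  rw [p.lower_dir_odd (by simp)] at hnode
  rcases Ladder.mem_tri.1 hx with rfl | rfl | rfl
  · linarith
  · exact absurd rfl hne
  · rw [Ladder.sideDist_tip, p.lower_dir_odd (by simp), lower_side, ← sub_sub, sub_neg_eq_add]
    linarith

theorem lt_sideDist_lower_tri_even {m : ℕ} {x : ℂ} (hx : x ∈ p.lower.tri (2 * m))
    {ψ : ℝ} (hψ : -p.t < ψ) (hψt : ψ + p.t + π / 3 < π) (hne : x ≠ p.lower.node (2 * m)) :
    sideDist ψ (p.lower.node (2 * m)) < sideDist ψ x := by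
  rcases Ladder.mem_tri.1 hx with rfl | rfl | rfl
  · exact absurd rfl hne
  · rw [Ladder.sideDist_node_succ, p.lower_dir_even (by simp), sub_neg_eq_add]
    linarith [sin_pos_of_pos_of_lt_pi (x := ψ + p.t) (by linarith) (by linarith [pi_pos])]
  · rw [Ladder.sideDist_tip, p.lower_dir_even (by simp), lower_side, ← sub_sub, sub_neg_eq_add,
      sub_neg_eq_add]
    linarith [sin_pos_of_pos_of_lt_pi (x := ψ + p.t + π / 3) (by linarith [pi_pos]) (by linarith)]

theorem sideDist_neg_sub_upper_tri_le {m : ℕ} {x : ℂ} (hx : x ∈ p.upper.tri (2 * m)) :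
    sideDist (-(p.τ - φ)) x ≤ sideDist (-(p.τ - φ)) (p.lower.node (2 * m)) := by
  have hnode : sideDist (-(p.τ - φ)) (p.upper.node (2 * m)) ≤
      sideDist (-(p.τ - φ)) (p.lower.node (2 * m)) := by
    have hsin : 2 * sin (p.τ - φ) * cos p.t ≤ 2 * sin p.τ * cos p.τ := by
      rw [← sin_two_mul, sin_two_mul_eq]
      have := p.sin_eq
      nlinarith [p.sin_sub_pos, p.cos_t_pos]
    rw [Ladder.sideDist_node_two_mul, Ladder.sideDist_node_two_mul]
    simp only [lower, upper, sub_zero, neg_sub, sub_sub_cancel_left, sin_neg]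
    rw [← neg_sub p.τ, sin_neg]
    nlinarith [mul_le_mul_of_nonneg_left hsin m.cast_nonneg]
  refine le_trans ?_ hnode
  rcases Ladder.mem_tri.1 hx with rfl | rfl | rfl
  · exact le_rfl
  · rw [Ladder.sideDist_node_succ, p.upper_dir_even (by simp), sub_self, sin_zero, add_zero]
  · rw [Ladder.sideDist_tip, p.upper_dir_even (by simp), upper_side, sub_add_cancel_left, sin_neg]
    linarith [sin_pos_of_pos_of_lt_pi (x := π / 3) (by positivity) (by linarith [pi_pos])]

theorem upper_tri_meetAtMostOnce_lower_tri_self (i : ℕ) :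
    MeetAtMostOnce (p.upper.tri i : Set ℂ) (p.lower.tri i) := by
  obtain ⟨m, rfl | rfl⟩ := i.even_or_odd'
  · exact meetAtMostOnce_of_separated _ le_rfl (fun x ↦ p.sideDist_neg_sub_upper_tri_le)
      fun x hx ↦ p.lt_sideDist_lower_tri_even hx (by linarith [p.τ_add_φ_lt_t, p.φ_pos])
        (by linarith [p.zero_lt_sub, p.t_lt, pi_pos])
  · exact meetAtMostOnce_of_separated _ le_rfl (fun x ↦ p.sideDist_upper_tri_odd_le)
      fun x ↦ p.lt_sideDist_lower_tri_odd

theorem upper_tri_meetAtMostOnce_lower_tri_succ (i : ℕ) :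
    MeetAtMostOnce (p.upper.tri i : Set ℂ) (p.lower.tri (i + 1)) := by
  obtain ⟨m, rfl | rfl⟩ := i.even_or_odd'
  · exact meetAtMostOnce_of_separated _ le_rfl (fun x ↦ p.sideDist_upper_tri_even_le)
      fun x ↦ p.lt_sideDist_lower_tri_odd
  · exact meetAtMostOnce_of_separated _ le_rfl (fun x ↦ p.sideDist_upper_tri_odd_le)
      fun x hx ↦ p.lt_sideDist_lower_tri_even (m := m + 1) hx
        (by linarith [p.zero_lt_sub, p.φ_pos, p.t_pos])
        (by linarith [p.τ_add_φ_lt_t, p.t_lt, pi_pos])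

theorem upper_tri_meetAtMostOnce_lower_tri {i j : ℕ} (hi : i ≤ 8) (hj : j ≤ 9) :
    MeetAtMostOnce (p.upper.tri i : Set ℂ) (p.lower.tri j) := by
  obtain hji | rfl | rfl | hij : j < i ∨ j = i ∨ j = i + 1 ∨ i + 2 ≤ j := by omega
  · exact (Ladder.meetAtMostOnce_of_re_le ((p.lower_node_re_le_upper_node_re _).trans
      (p.upper.node_re_strictMono.monotone hji))).symm
  · exact p.upper_tri_meetAtMostOnce_lower_tri_self j
  · exact p.upper_tri_meetAtMostOnce_lower_tri_succ i
  · have := p.upper_node_re_lt_lower_node_succ_re (i := i + 1) (by omega)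
    exact Ladder.meetAtMostOnce_of_re_le (this.le.trans (p.lower.node_re_strictMono.monotone hij))

theorem lower_node_mem_openSector (j : ℕ) : p.lower.node j ∈ openSector φ := by
  have hbase := p.base_re_pos
  have him := p.sin_t_lt_base_im
  have hside := p.sideDist_base_pos
  have ht := p.sin_t_pos
  have hcos := p.cos_t_pos
  have hsin := p.sin_φ_pos
  refine ⟨?_, ?_, ?_⟩
  · rw [lower_node_re]
    positivity
  · rw [lower_node_im]
    split_ifs <;> linarith
  · obtain ⟨m, rfl | rfl⟩ := j.even_or_odd'
    · rw [Ladder.sideDist_node_two_mul]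
      simp only [lower, sub_zero]
      positivity
    · have hstep : 0 < sin (φ + p.t) := sin_pos_of_pos_of_lt_pi (by linarith [p.φ_pos, p.t_pos])
        (by linarith [p.φ_lt, p.t_lt, pi_pos])
      rw [Ladder.sideDist_node_succ, Ladder.sideDist_node_two_mul, p.lower_dir_even (by simp),
        sub_neg_eq_add]
      simp only [lower, sub_zero]
      positivity

theorem upper_node_mem_openSector (i : ℕ) : p.upper.node i ∈ openSector φ := by
  have him := p.sin_t_lt_base_im
  have hsin := p.sin_sub_pos
  have hsin_t := p.sin_sub_lt_sin_t
  refine ⟨p.base_re_pos.trans_le ?_, ?_, ?_⟩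
  · have := p.upper.node_re_strictMono.monotone i.zero_le
    rwa [Ladder.node_zero] at this
  · obtain ⟨m, rfl | rfl⟩ := i.even_or_odd'
    · rw [upper_node_two_mul]
      have : 0 < p.base.im := by linarith
      positivity
    · rw [upper_node_two_mul_add_one]
      have : 0 ≤ m / 4 * sin (p.τ - φ) := by positivity
      linarith
  · have hside := p.sideDist_base_pos
    have hstep : 0 < sin p.τ := sin_pos_of_pos_of_lt_pi p.upper.tilt_pos
      (by linarith [p.φ_pos, p.τ_add_φ_lt_t, p.t_lt, pi_pos])
    refine lt_of_lt_of_eq ?_ (p.upper.sideDist_axis_node i).symm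
    simp only [upper]
    split_ifs <;> linarith

theorem lower_tip_im (j : ℕ) : (p.lower.tip j).im = 0 := by
  have := p.lower.sideDist_axis_tip j
  simp only [lower, sideDist_apply, sin_zero, cos_zero, base, sub_neg_eq_add, add_comm p.t] at this
  simp only [lower, base]
  linarith

theorem sideDist_upper_tip (i : ℕ) : sideDist φ (p.upper.tip i) = 0 := by
  refine (p.upper.sideDist_axis_tip i).trans ?_
  simp only [upper]
  rw [sideDist_base, ← neg_sub, sin_neg, neg_add_cancel]

theorem lower_tip_mem_sector (j : ℕ) : p.lower.tip j ∈ sector φ := by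
  have hre : 0 < (p.lower.tip j).re :=
    (p.lower_node_mem_openSector j).1.trans (p.lower.node_re_lt_tip_re j)
  refine ⟨hre, (p.lower_tip_im j).ge, ?_⟩
  rw [sideDist_apply, lower_tip_im, mul_zero, sub_zero]
  exact (mul_pos p.sin_φ_pos hre).le

theorem upper_tip_im_pos (i : ℕ) : 0 < (p.upper.tip i).im := by
  have hre : 0 < (p.upper.tip i).re :=
    (p.upper_node_mem_openSector i).1.trans (p.upper.node_re_lt_tip_re i)
  have hside := p.sideDist_upper_tip i
  rw [sideDist_apply] at hside
  refine pos_of_mul_pos_right (a := cos φ) ?_ p.cos_φ_pos.le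
  linarith [mul_pos p.sin_φ_pos hre]

theorem upper_tip_mem_sector (i : ℕ) : p.upper.tip i ∈ sector φ :=
  ⟨(p.upper_node_mem_openSector i).1.trans (p.upper.node_re_lt_tip_re i),
    (p.upper_tip_im_pos i).le, (p.sideDist_upper_tip i).ge⟩

end RingParams

/-! ### The closed chain of triangles in a sector -/

/-- The triangles of the two ladders in a sector form a closed chain, indexed by `ZMod 19`: first
the ten triangles of the lower ladder, then the nine triangles of the upper ladder in reverse
order. This is the position of a triangle of the chain within its ladder. -/
def rung (k : ZMod 19) : ℕ := if k.val < 10 then k.val else 18 - k.val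

theorem forall_chain {P : ZMod 19 → Prop} (lower : ∀ j : ℕ, j ≤ 9 → P j)
    (upper : ∀ i : ℕ, i ≤ 8 → P (-1 - i)) (k : ZMod 19) : P k := by
  rcases lt_or_ge k.val 10 with hk | hk
  · simpa using lower k.val (by omega)
  · have := upper (18 - k.val) (by omega)
    rw [Nat.cast_sub (by have := k.val_lt; omega), ZMod.natCast_zmod_val] at this
    have h19 : (19 : ZMod 19) = 0 := rfl
    convert this using 1
    push_cast
    linear_combination h19

theorem val_lower {j : ℕ} (hj : j ≤ 9) : (j : ZMod 19).val = j :=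
  ZMod.val_natCast_of_lt (by omega)

theorem val_upper {i : ℕ} (hi : i ≤ 8) : (-1 - i : ZMod 19).val = 18 - i := by
  rw [show (-1 - i : ZMod 19) = (18 - i : ℕ) by rw [Nat.cast_sub (by omega)]; rfl]
  exact ZMod.val_natCast_of_lt (by omega)

theorem rung_lower {j : ℕ} (hj : j ≤ 9) : rung j = j := by
  rw [rung, val_lower hj, if_pos (by omega)]

theorem rung_upper {i : ℕ} (hi : i ≤ 8) : rung (-1 - i) = i := by
  rw [rung, val_upper hi, if_neg (by omega)]
  omega

namespace RingParams

variable {φ : ℝ} (p : RingParams φ)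

/-- The ladder containing a triangle of the chain. -/
def ladder (k : ZMod 19) : Ladder := if k.val < 10 then p.lower else p.upper

/-- A triangle of the chain. -/
def tri (k : ZMod 19) : Finset ℂ := (p.ladder k).tri (rung k)

/-- The vertex at which a triangle of the chain touches a wall of the sector. -/
def tip (k : ZMod 19) : ℂ := (p.ladder k).tip (rung k)

/-- The direction of the side opposite to the tip. -/
def dir (k : ZMod 19) : ℝ := (p.ladder k).dir (rung k)

/-- The common vertex of the triangles `k` and `k + 1` of the chain. -/
def node (k : ZMod 19) : ℂ :=
  if k.val < 10 then p.lower.node (k.val + 1) else p.upper.node (18 - k.val)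

theorem ladder_lower {j : ℕ} (hj : j ≤ 9) : p.ladder j = p.lower := by
  rw [ladder, val_lower hj, if_pos (by omega)]

theorem ladder_upper {i : ℕ} (hi : i ≤ 8) : p.ladder (-1 - i) = p.upper := by
  rw [ladder, val_upper hi, if_neg (by omega)]

theorem tri_lower {j : ℕ} (hj : j ≤ 9) : p.tri j = p.lower.tri j := by
  rw [tri, p.ladder_lower hj, rung_lower hj]

theorem tri_upper {i : ℕ} (hi : i ≤ 8) : p.tri (-1 - i) = p.upper.tri i := by
  rw [tri, p.ladder_upper hi, rung_upper hi]

theorem tip_lower {j : ℕ} (hj : j ≤ 9) : p.tip j = p.lower.tip j := by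
  rw [tip, p.ladder_lower hj, rung_lower hj]

theorem tip_upper {i : ℕ} (hi : i ≤ 8) : p.tip (-1 - i) = p.upper.tip i := by
  rw [tip, p.ladder_upper hi, rung_upper hi]

theorem dir_lower {j : ℕ} (hj : j ≤ 9) : p.dir j = p.lower.dir j := by
  rw [dir, p.ladder_lower hj, rung_lower hj]

theorem dir_upper {i : ℕ} (hi : i ≤ 8) : p.dir (-1 - i) = p.upper.dir i := by
  rw [dir, p.ladder_upper hi, rung_upper hi]

theorem node_lower {j : ℕ} (hj : j ≤ 9) : p.node j = p.lower.node (j + 1) := by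
  rw [node, val_lower hj, if_pos (by omega)]

theorem node_upper {i : ℕ} (hi : i ≤ 8) : p.node (-1 - i) = p.upper.node i := by
  rw [node, val_upper hi, if_neg (by omega), Nat.sub_sub_self (by omega)]

theorem node_lower_sub_one {j : ℕ} (hj : j ≤ 9) : p.node (j - 1) = p.lower.node j := by
  rcases j with - | j
  · have := p.node_upper (Nat.zero_le 8)
    simpa [Ladder.node_zero, lower, upper] using this
  · rw [Nat.cast_add_one, add_sub_cancel_right]
    exact p.node_lower (by omega)

theorem node_upper_sub_one {i : ℕ} (hi : i ≤ 8) : p.node (-1 - i - 1) = p.upper.node (i + 1) := by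
  rcases hi.eq_or_lt with rfl | hi
  · rw [← lower_node_ten]
    exact p.node_lower le_rfl
  · have := p.node_upper (i := i + 1) (by omega)
    rwa [Nat.cast_add_one, ← sub_sub] at this

theorem mem_tri {k : ZMod 19} {v : ℂ} :
    v ∈ p.tri k ↔ v = p.node (k - 1) ∨ v = p.node k ∨ v = p.tip k := by
  induction k using forall_chain with
  | lower j hj =>
    rw [p.tri_lower hj, p.tip_lower hj, p.node_lower hj, p.node_lower_sub_one hj, Ladder.mem_tri]
  | upper i hi =>
    rw [p.tri_upper hi, p.tip_upper hi, p.node_upper hi, p.node_upper_sub_one hi, Ladder.mem_tri]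
    tauto

theorem node_injective : Function.Injective p.node := by
  intro k l h
  induction k using forall_chain with
  | lower j hj =>
    rw [p.node_lower hj] at h
    induction l using forall_chain with
    | lower j' hj' =>
      rw [p.node_lower hj'] at h
      rw [Nat.succ_injective (p.lower.node_re_strictMono.injective (congrArg Complex.re h))]
    | upper i hi => exact absurd (p.node_upper hi ▸ h) (p.lower_node_succ_ne_upper_node hi j)
  | upper i hi =>
    rw [p.node_upper hi] at h
    induction l using forall_chain with
    | lower j hj => exact absurd (p.node_lower hj ▸ h.symm) (p.lower_node_succ_ne_upper_node hi j)
    | upper i' hi' =>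
      rw [p.node_upper hi'] at h
      rw [p.upper.node_re_strictMono.injective (congrArg Complex.re h)]

theorem lower_tip_ne_upper_tip (j i : ℕ) : p.lower.tip j ≠ p.upper.tip i := fun h ↦
  (p.upper_tip_im_pos i).ne' (h ▸ p.lower_tip_im j)

theorem tip_injective : Function.Injective p.tip := by
  intro k l h
  induction k using forall_chain with
  | lower j hj =>
    rw [p.tip_lower hj] at h
    induction l using forall_chain with
    | lower j' hj' =>
      rw [p.tip_lower hj'] at h
      rw [p.lower.tip_re_strictMono.injective (congrArg Complex.re h)]
    | upper i hi => exact absurd (p.tip_upper hi ▸ h) (p.lower_tip_ne_upper_tip j i)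
  | upper i hi =>
    rw [p.tip_upper hi] at h
    induction l using forall_chain with
    | lower j hj => exact absurd (p.tip_lower hj ▸ h.symm) (p.lower_tip_ne_upper_tip j i)
    | upper i' hi' =>
      rw [p.tip_upper hi'] at h
      rw [p.upper.tip_re_strictMono.injective (congrArg Complex.re h)]

theorem node_mem_openSector (k : ZMod 19) : p.node k ∈ openSector φ := by
  induction k using forall_chain with
  | lower j hj => exact p.node_lower hj ▸ p.lower_node_mem_openSector _
  | upper i hi => exact p.node_upper hi ▸ p.upper_node_mem_openSector _

theorem tip_mem_sector (k : ZMod 19) : p.tip k ∈ sector φ := by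
  induction k using forall_chain with
  | lower j hj => exact p.tip_lower hj ▸ p.lower_tip_mem_sector j
  | upper i hi => exact p.tip_upper hi ▸ p.upper_tip_mem_sector i

theorem sideDist_axis_tip (k : ZMod 19) : sideDist (p.ladder k).axis (p.tip k) = 0 := by
  induction k using forall_chain with
  | lower j hj =>
    rw [p.ladder_lower hj, p.tip_lower hj, sideDist_apply, p.lower_tip_im, mul_zero, sub_zero]
    exact mul_eq_zero_of_left sin_zero _
  | upper i hi =>
    rw [p.ladder_upper hi, p.tip_upper hi]
    exact p.sideDist_upper_tip i

theorem tip_not_mem_openSector (k : ZMod 19) : p.tip k ∉ openSector φ := by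
  rintro ⟨-, him, hside⟩
  induction k using forall_chain with
  | lower j hj => exact him.ne' (p.tip_lower hj ▸ p.lower_tip_im j)
  | upper i hi => exact hside.ne' (p.tip_upper hi ▸ p.sideDist_upper_tip i)

theorem convexHull_tri_subset (k : ZMod 19) :
    convexHull ℝ (p.tri k : Set ℂ) ⊆ insert (p.tip k) (openSector φ) := by
  refine convexHull_subset_insert_openSector (p.tip_mem_sector k) fun x hx hne ↦ ?_
  rcases (p.mem_tri).1 hx with rfl | rfl | rfl
  exacts [p.node_mem_openSector _, p.node_mem_openSector _, absurd rfl hne]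

theorem tri_meetAtMostOnce_tri {k l : ZMod 19} (hkl : k ≠ l) :
    MeetAtMostOnce (p.tri k : Set ℂ) (p.tri l) := by
  induction k using forall_chain with
  | lower j hj =>
    rw [p.tri_lower hj]
    induction l using forall_chain with
    | lower j' hj' =>
      exact p.tri_lower hj' ▸ p.lower.tri_meetAtMostOnce_tri fun h ↦ hkl (congrArg _ h)
    | upper i hi => exact p.tri_upper hi ▸ (p.upper_tri_meetAtMostOnce_lower_tri hi hj).symm
  | upper i hi =>
    rw [p.tri_upper hi]
    induction l using forall_chain with
    | lower j hj => exact p.tri_lower hj ▸ p.upper_tri_meetAtMostOnce_lower_tri hi hj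
    | upper i' hi' =>
      exact p.tri_upper hi' ▸ p.upper.tri_meetAtMostOnce_tri fun h ↦ hkl (by rw [h])

theorem dir_ne_dir_add_one (k : ZMod 19) : p.dir k ≠ p.dir (k + 1) := by
  induction k using forall_chain with
  | lower j hj =>
    rw [p.dir_lower hj]
    rcases hj.eq_or_lt with rfl | hj
    · rw [show ((9 : ℕ) + 1 : ZMod 19) = -1 - (8 : ℕ) from rfl, p.dir_upper le_rfl,
        p.lower_dir_odd (by decide), p.upper_dir_even (by decide)]
      linarith [p.t_pos, p.zero_lt_sub]
    · have := p.dir_lower (j := j + 1) (by omega)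
      rw [Nat.cast_add_one] at this
      exact this ▸ p.lower.dir_ne_dir_succ j
  | upper i hi =>
    rw [p.dir_upper hi]
    rcases i with - | i
    · rw [show (-1 - (0 : ℕ) + 1 : ZMod 19) = (0 : ℕ) from rfl, p.dir_lower (Nat.zero_le 9),
        p.lower_dir_even Even.zero, p.upper_dir_even Even.zero]
      linarith [p.φ_pos, p.τ_add_φ_lt_t]
    · rw [Nat.cast_add_one, ← sub_sub, sub_add_cancel, p.dir_upper (by omega)]
      exact (p.upper.dir_ne_dir_succ i).symm

theorem eq_of_tip_mem_tri {k l : ZMod 19} (h : p.tip k ∈ p.tri l) : k = l := by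
  rcases (p.mem_tri).1 h with h | h | h
  · exact absurd (h ▸ p.node_mem_openSector _) (p.tip_not_mem_openSector k)
  · exact absurd (h ▸ p.node_mem_openSector _) (p.tip_not_mem_openSector k)
  · exact p.tip_injective h

theorem eq_or_eq_of_node_mem_tri {k l : ZMod 19} (h : p.node k ∈ p.tri l) : l = k ∨ l = k + 1 := by
  rcases (p.mem_tri).1 h with h | h | h
  · exact Or.inr (by rw [p.node_injective h, sub_add_cancel])
  · exact Or.inl (p.node_injective h).symm
  · exact absurd (h ▸ p.node_mem_openSector k) (p.tip_not_mem_openSector l)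

theorem dir_ne_dir {k l : ZMod 19} (hkl : k ≠ l) {v : ℂ} (hk : v ∈ p.tri k) (hl : v ∈ p.tri l) :
    p.dir k ≠ p.dir l := by
  rcases (p.mem_tri).1 hk with rfl | rfl | rfl
  · rcases p.eq_or_eq_of_node_mem_tri hl with rfl | rfl
    · simpa using (p.dir_ne_dir_add_one (k - 1)).symm
    · exact absurd (sub_add_cancel k 1).symm hkl
  · rcases p.eq_or_eq_of_node_mem_tri hl with rfl | rfl
    · exact absurd rfl hkl
    · exact p.dir_ne_dir_add_one k
  · exact absurd (p.eq_of_tip_mem_tri hl) hkl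

end RingParams

/-! ### The ring of sectors -/

theorem cis_two_mul_mul_conj_eq {ψ : ℝ} {z : ℂ} (hz : sideDist ψ z = 0) :
    cis (2 * ψ) * starRingEnd ℂ z = z := by
  rw [sideDist_apply] at hz
  apply Complex.ext
  · rw [Complex.mul_re, Complex.exp_ofReal_mul_I_re, Complex.exp_ofReal_mul_I_im, Complex.conj_re,
      Complex.conj_im, cos_two_mul', sin_two_mul]
    linear_combination (-2 * sin ψ) * hz + z.re * sin_sq_add_cos_sq ψ
  · rw [Complex.mul_im, Complex.exp_ofReal_mul_I_re, Complex.exp_ofReal_mul_I_im, Complex.conj_re,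
      Complex.conj_im, cos_two_mul, sin_two_mul]
    linear_combination (2 * cos ψ) * hz

/-- The reflection in the wall of the sector touched by the triangle `k` of the chain. -/
def reflection (n : ℕ) (k : ZMod 19) : DihedralGroup n := .sr (if k.val < 10 then 0 else -1)

theorem reflection_mul_self (n : ℕ) (k : ZMod 19) : reflection n k * reflection n k = 1 :=
  DihedralGroup.sr_mul_self _

theorem reflection_ne_one (n : ℕ) (k : ZMod 19) : reflection n k ≠ 1 := nofun

namespace RingParams

variable {n : ℕ} (p : RingParams (π / n))

theorem reflection_eq_of_tip_im_eq_zero {k : ZMod 19} (h : (p.tip k).im = 0) :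
    reflection n k = .sr 0 := by
  induction k using forall_chain with
  | lower j hj => rw [reflection, val_lower hj, if_pos (by omega)]
  | upper i hi => exact absurd (p.tip_upper hi ▸ h) (p.upper_tip_im_pos i).ne'

theorem reflection_eq_of_sideDist_tip_eq_zero {k : ZMod 19} (h : sideDist (π / n) (p.tip k) = 0) :
    reflection n k = .sr (-1) := by
  induction k using forall_chain with
  | lower j hj =>
    rw [p.tip_lower hj, sideDist_apply, p.lower_tip_im, mul_zero, sub_zero] at h
    exact absurd h (mul_pos p.sin_φ_pos (p.lower_tip_mem_sector j).1).ne'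
  | upper i hi => rw [reflection, val_upper hi, if_neg (by omega)]

variable [NeZero n]

theorem act_reflection (k : ZMod 19) (z : ℂ) :
    act (reflection n k) z = cis (2 * (p.ladder k).axis) * starRingEnd ℂ z := by
  rw [reflection, act_sr, map_mul, ladder]
  congr 1
  split_ifs
  · simp [lower, cis]
  · rw [← Int.cast_one, ← Int.cast_neg, toCircle_intCast_eq_cis, conj_cis, upper]
    norm_num

theorem act_reflection_tip (k : ZMod 19) : act (reflection n k) (p.tip k) = p.tip k :=
  (p.act_reflection k _).trans (cis_two_mul_mul_conj_eq (p.sideDist_axis_tip k))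

theorem act_reflection_cis_dir (k : ZMod 19) :
    act (reflection n k) (cis (p.dir k)) = cis ((p.ladder k).dir (rung k + 1)) := by
  rw [p.act_reflection, conj_cis, ← cis_add, ← sub_eq_add_neg, dir, Ladder.two_mul_axis_sub_dir]

theorem eq_of_act_eq_act {γ δ : DihedralGroup n} {k l : ZMod 19} {z w : ℂ}
    (hz : z ∈ convexHull ℝ (p.tri k : Set ℂ)) (hw : w ∈ convexHull ℝ (p.tri l : Set ℂ))
    (h : act γ z = act δ w) : z = w ∧ (γ = δ ∨ z = p.tip k ∧ δ = γ * reflection n k) := by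
  have mem_sector {m : ZMod 19} {x : ℂ} (hx : x ∈ convexHull ℝ (p.tri m : Set ℂ)) :
      x ∈ sector (π / n) := by
    rcases p.convexHull_tri_subset m hx with rfl | hx
    exacts [p.tip_mem_sector m, openSector_subset_sector _ hx]
  have hact : act (δ⁻¹ * γ) z = w := by
    rw [act_mul, h, ← act_mul, inv_mul_cancel, map_one, LinearIsometryEquiv.coe_one, id]
  have eq_mul {ρ : DihedralGroup n} (hρ : δ⁻¹ * γ = ρ) (hk : reflection n k = ρ) :
      δ = γ * reflection n k := by
    rw [inv_mul_eq_iff_eq_mul.1 hρ, ← hk, mul_assoc, reflection_mul_self, mul_one]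
  obtain ⟨rfl, hδγ | ⟨hδγ, him⟩ | ⟨hδγ, hside⟩⟩ := eq_of_act_eq (mem_sector hz) (mem_sector hw) hact
  · exact ⟨rfl, Or.inl (inv_mul_eq_one.1 hδγ).symm⟩
  · rcases p.convexHull_tri_subset k hz with rfl | hz
    · exact ⟨rfl, Or.inr ⟨rfl, eq_mul hδγ (p.reflection_eq_of_tip_im_eq_zero him)⟩⟩
    · exact absurd him hz.2.1.ne'
  · rcases p.convexHull_tri_subset k hz with rfl | hz
    · exact ⟨rfl, Or.inr ⟨rfl, eq_mul hδγ (p.reflection_eq_of_sideDist_tip_eq_zero hside)⟩⟩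
    · exact absurd hside hz.2.2.ne'

/-- The image of a triangle of the chain under a symmetry. -/
def copy (γ : DihedralGroup n) (k : ZMod 19) : Finset ℂ := (p.tri k).image (act γ)

theorem card_copy (γ : DihedralGroup n) (k : ZMod 19) : (p.copy γ k).card = 3 :=
  (Finset.card_image_of_injective _ (act γ).injective).trans ((p.ladder k).card_tri _)

theorem mem_copy {γ : DihedralGroup n} {k : ZMod 19} {v : ℂ} :
    v ∈ p.copy γ k ↔ ∃ z ∈ p.tri k, act γ z = v := Finset.mem_image

theorem act_mem_copy_iff {γ δ : DihedralGroup n} {k l : ZMod 19} {z : ℂ} (hz : z ∈ p.tri k) :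
    act γ z ∈ p.copy δ l ↔
      δ = γ ∧ z ∈ p.tri l ∨ (δ = γ * reflection n k ∧ l = k) ∧ z = p.tip k := by
  constructor
  · intro h
    obtain ⟨w, hw, h⟩ := p.mem_copy.1 h
    obtain ⟨rfl, rfl | ⟨rfl, rfl⟩⟩ :=
      p.eq_of_act_eq_act (subset_convexHull ℝ _ hz) (subset_convexHull ℝ _ hw) h.symm
    exacts [Or.inl ⟨rfl, hw⟩, Or.inr ⟨⟨rfl, (p.eq_of_tip_mem_tri hw).symm⟩, rfl⟩]
  · rintro (⟨rfl, hz⟩ | ⟨⟨rfl, rfl⟩, rfl⟩)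
    · exact p.mem_copy.2 ⟨z, hz, rfl⟩
    · refine p.mem_copy.2 ⟨_, hz, ?_⟩
      rw [act_mul, act_reflection_tip]

theorem convexHull_copy (γ : DihedralGroup n) (k : ZMod 19) :
    convexHull ℝ (p.copy γ k : Set ℂ) = act γ '' convexHull ℝ (p.tri k : Set ℂ) := by
  rw [copy, Finset.coe_image]
  exact ((act γ).toLinearEquiv.toLinearMap.image_convexHull _).symm

theorem dist_eq_one_of_mem_copy {γ : DihedralGroup n} {k : ZMod 19} {u v : ℂ}
    (hu : u ∈ p.copy γ k) (hv : v ∈ p.copy γ k) (huv : u ≠ v) : dist u v = 1 := by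
  obtain ⟨z, hz, rfl⟩ := p.mem_copy.1 hu
  obtain ⟨w, hw, rfl⟩ := p.mem_copy.1 hv
  rw [LinearIsometryEquiv.dist_map]
  exact (p.ladder k).dist_eq_one hz hw (ne_of_apply_ne _ huv)

theorem copy_meetAtMostOnce_copy {γ δ : DihedralGroup n} {k l : ZMod 19}
    (h : (γ, k) ≠ (δ, l)) : MeetAtMostOnce (p.copy γ k : Set ℂ) (p.copy δ l) := by
  rw [MeetAtMostOnce, convexHull_copy, convexHull_copy]
  rcases eq_or_ne γ δ with rfl | hγδ
  · rw [← Set.image_inter (act γ).injective]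
    exact (p.tri_meetAtMostOnce_tri fun hkl ↦ h (by rw [hkl])).image _
  · have eq_tip {x : ℂ} (hx : x ∈ act γ '' convexHull ℝ (p.tri k : Set ℂ) ∩
        act δ '' convexHull ℝ (p.tri l : Set ℂ)) : x = act γ (p.tip k) := by
      obtain ⟨⟨z, hz, rfl⟩, w, hw, hwz⟩ := hx
      rw [((p.eq_of_act_eq_act hz hw hwz.symm).2.resolve_left hγδ).1]
    exact fun x hx y hy ↦ (eq_tip hx).trans (eq_tip hy).symm

theorem copy_not_aligned {γ δ : DihedralGroup n} {k l : ZMod 19} {u v w : ℂ}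
    (h : (γ, k) ≠ (δ, l)) (hvγ : v ∈ p.copy γ k) (hvδ : v ∈ p.copy δ l) (hu : u ∈ p.copy γ k)
    (hw : w ∈ p.copy δ l) (huv : u ≠ v) (hwv : w ≠ v) : (u - v) ^ 6 ≠ (w - v) ^ 6 := by
  obtain ⟨v, hvk, rfl⟩ := p.mem_copy.1 hvγ
  obtain ⟨u, huk, rfl⟩ := p.mem_copy.1 hu
  obtain ⟨w, hwl, rfl⟩ := p.mem_copy.1 hw
  have hu6 : (u - v) ^ 6 = cis (p.dir k) ^ 6 :=
    (p.ladder k).sub_pow_six huk hvk (ne_of_apply_ne _ huv)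
  intro h6
  rcases (p.act_mem_copy_iff hvk).1 hvδ with ⟨rfl, hvl⟩ | ⟨⟨rfl, rfl⟩, rfl⟩
  · have hw6 : (w - v) ^ 6 = cis (p.dir l) ^ 6 :=
      (p.ladder l).sub_pow_six hwl hvl (ne_of_apply_ne _ hwv)
    rw [← map_sub, ← map_sub, act_pow_eq_iff, hu6, hw6] at h6
    exact p.dir_ne_dir (fun hkl ↦ h (by rw [hkl])) hvk hvl
      (eq_of_cis_pow_six_eq ((p.ladder k).abs_dir_lt _) ((p.ladder l).abs_dir_lt _) h6)
  · have hw6 : (w - p.tip l) ^ 6 = cis (p.dir l) ^ 6 :=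
      (p.ladder l).sub_pow_six hwl hvk fun h ↦ hwv (by rw [h, act_mul, act_reflection_tip])
    rw [act_mul, ← map_sub, ← map_sub, act_pow_eq_iff, hu6] at h6
    nth_rw 1 [← p.act_reflection_tip l] at h6
    rw [← map_sub, (act_pow_eq_iff _ _).2 hw6, act_reflection_cis_dir] at h6
    exact (p.ladder l).dir_ne_dir_succ _
      (eq_of_cis_pow_six_eq ((p.ladder l).abs_dir_lt _) ((p.ladder l).abs_dir_lt _) h6)

theorem exists_other_copy {γ : DihedralGroup n} {k : ZMod 19} {v : ℂ} (hv : v ∈ p.copy γ k) :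
    ∃ j ≠ (γ, k), v ∈ p.copy j.1 j.2 ∧ ∀ l : DihedralGroup n × ZMod 19, v ∈ p.copy l.1 l.2 →
      l = (γ, k) ∨ l = j := by
  have one_ne_zero : (1 : ZMod 19) ≠ 0 := by decide
  obtain ⟨z, hz, rfl⟩ := p.mem_copy.1 hv
  have node_eq_or_eq {m : ZMod 19} (hm : p.node m ∈ p.tri k) {l : DihedralGroup n × ZMod 19}
      (hl : act γ (p.node m) ∈ p.copy l.1 l.2) : l = (γ, m) ∨ l = (γ, m + 1) := by
    rcases (p.act_mem_copy_iff hm).1 hl with ⟨hγ, hl⟩ | ⟨-, htip⟩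
    · exact (p.eq_or_eq_of_node_mem_tri hl).imp (Prod.ext hγ) (Prod.ext hγ)
    · exact absurd (htip ▸ p.node_mem_openSector m) (p.tip_not_mem_openSector k)
  rcases p.mem_tri.1 hz with rfl | rfl | rfl
  · refine ⟨(γ, k - 1), by simp [one_ne_zero], ?_, fun l hl ↦ ?_⟩
    · exact (p.act_mem_copy_iff hz).2 (Or.inl ⟨rfl, p.mem_tri.2 (Or.inr (Or.inl rfl))⟩)
    · simpa using (node_eq_or_eq hz hl).symm
  · refine ⟨(γ, k + 1), by simp [one_ne_zero], ?_, fun l hl ↦ node_eq_or_eq hz hl⟩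
    exact (p.act_mem_copy_iff hz).2 (Or.inl ⟨rfl, p.mem_tri.2 (Or.inl (by simp))⟩)
  · refine ⟨(γ * reflection n k, k), ?_, ?_, fun l hl ↦ ?_⟩
    · simp [reflection_ne_one]
    · exact (p.act_mem_copy_iff hz).2 (Or.inr ⟨⟨rfl, rfl⟩, rfl⟩)
    · rcases (p.act_mem_copy_iff hz).1 hl with ⟨hγ, hl⟩ | ⟨⟨hγ, hk⟩, -⟩
      · exact Or.inl (Prod.ext hγ (p.eq_of_tip_mem_tri hl).symm)
      · exact Or.inr (Prod.ext hγ hk)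

/-- The triangles of the ring graph: the images of the chain under the dihedral group. -/
def ring : TriangleSystem (DihedralGroup n × ZMod 19) where
  tri i := p.copy i.1 i.2
  card_tri i := p.card_copy i.1 i.2
  dist_eq_one := p.dist_eq_one_of_mem_copy
  meetAtMostOnce := p.copy_meetAtMostOnce_copy
  not_aligned := p.copy_not_aligned
  exists_other := p.exists_other_copy

theorem rot_act (γ : DihedralGroup n) (z : ℂ) :
    rot 0 (2 * π / n) (act γ z) = act (.r 1 * γ) z := by
  have h := toCircle_intCast_eq_cis (n := n) 1
  rw [Int.cast_one, Int.cast_one, mul_one, ← mul_div_assoc] at h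
  rw [act_mul, act_r, h, rot, zero_add, sub_zero]

theorem ring_rotInvariant : p.ring.graph.RotInvariant 0 (2 * π / n) := by
  refine p.ring.rotInvariant ((Equiv.mulLeft (.r 1)).prodCongr (Equiv.refl _)) fun ⟨γ, k⟩ ↦ ?_
  refine Finset.image_image.trans (congrArg (Finset.image · (p.tri k)) ?_)
  exact funext (rot_act γ)

theorem ring_triangleCount : p.ring.graph.triangleCount = 38 * n := by
  rw [TriangleSystem.triangleCount, Fintype.card_prod, DihedralGroup.card, ZMod.card]
  ring

end RingParams

end RingGraph

open Real RingGraph in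
theorem exists_four_regular_ring_graph_order_100_of_3800_triangles_general (n : ℕ) (hn : 100 ≤ n) :
    ∃ G : UnitDistGraph, ∃ c : ℂ, G.Regular4 ∧ G.NonOverlapping ∧
      G.OnlyUnitTriangles ∧ G.NoAdditionalTriangles ∧
      G.triangleCount = 38 * n ∧ G.RotInvariant c (2 * π / n) := by
  have : NeZero n := ⟨by omega⟩
  have hφ : 0 < π / n := by positivity
  have hφ_le : π / n ≤ π / 100 := by gcongr; exact_mod_cast hn
  have hsin : 1000 * sin (π / n) ^ 2 < 1 := by
    have := sin_pos_of_pos_of_lt_pi hφ (by linarith)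
    nlinarith [sin_lt hφ, pi_lt_d2]
  obtain ⟨p⟩ := RingParams.nonempty hφ (by linarith) hsin
  exact ⟨p.ring.graph, 0, p.ring.regular4, p.ring.nonOverlapping, p.ring.onlyUnitTriangles,
    p.ring.noAdditionalTriangles, p.ring_triangleCount, p.ring_rotInvariant⟩

open Real in
/-- There exists a finite 4-regular straight-line
unit-distance graph (not necessarily planar) built from exactly
`3800 = 100 * 38` non-overlapping unit triangles, in which every edge lies in a
unit triangle, with no additional triangles, invariant under rotation by
`2π/100` about some center. -/
theorem exists_four_regular_ring_graph_order_100_of_3800_triangles :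
    ∃ G : UnitDistGraph, ∃ c : ℂ, G.Regular4 ∧ G.NonOverlapping ∧
      G.OnlyUnitTriangles ∧ G.NoAdditionalTriangles ∧
      G.triangleCount = 3800 ∧ G.RotInvariant c (2 * π / 100) := by
  simpa using exists_four_regular_ring_graph_order_100_of_3800_triangles_general 100 le_rfl
end
end
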